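/- arXiv:1102.2883 — 2 statements merged into one kernel-verified Lean document; each statement's English description precedes it below -/
import Mathlib

section
/- Let R ∈ ℤ_{>0}^m, C ∈ ℤ_{>0}^n, and K ∈ ℤ_{>0}^{m×n}, and assume T_K(R,C) > 0. Then lim_{s→∞} (1/s²) ln T_{K^{(s)}}(R^{(s)},C^{(s)}) = ln ( inf_{x_1,…,x_m,y_1,…,y_n > 0} G(x,y) / (x^R y^C) ), where G(x,y) := ∏_{i=1}^m ∏_{j=1}^n [1 + x_i y_j + (x_i y_j)² + ⋯ + (x_i y_j)^{k_{ij}}] and x^R y^C := ∏_i x_i^{r_i} ∏_j y_j^{c_j}. -/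
open Real Filter Finset

noncomputable section

/-- `ω(n) = n^n / n!`. -/
def omegaFn (n : ℕ) : ℝ := (n : ℝ) ^ n / (n.factorial : ℝ)

/-- `Ω(V)`: the sum of `ω(v)` over the entries of a vector `V`. -/
def OmegaVec {I : Type*} [Fintype I] (V : I → ℕ) : ℝ := ∑ i, omegaFn (V i)

/-- `Ω(K)`: the sum of `ω(k)` over the entries of a matrix `K`. -/
def OmegaMat {I J : Type*} [Fintype I] [Fintype J] (K : I → J → ℕ) : ℝ :=
  ∑ i, ∑ j, omegaFn (K i j)

/-- `T_K(R,C)`: the number of nonnegative-integer matrices with row sums `R`,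
column sums `C`, and entries bounded by `K` (a bound of `⊤` means unbounded). -/
def tableCount {I J : Type*} [Fintype I] [Fintype J]
    (K : I → J → ℕ∞) (R : I → ℕ) (C : J → ℕ) : ℕ :=
  Set.ncard {A : I → J → ℕ |
    (∀ i, ∑ j, A i j = R i) ∧ (∀ j, ∑ i, A i j = C j) ∧ ∀ i j, (A i j : ℕ∞) ≤ K i j}

/-- The `s`-fold cloning of a margin vector. -/
def cloneVec {m : ℕ} (s : ℕ) (R : Fin m → ℕ) : Fin s × Fin m → ℕ :=
  fun p => s * R p.2

/-- The `s`-fold cloning of a bound matrix. -/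
def cloneMat {m n : ℕ} (s : ℕ) (K : Fin m → Fin n → ℕ∞) :
    Fin s × Fin m → Fin s × Fin n → ℕ∞ :=
  fun p q => K p.2 q.2

/-- The mean of the truncated geometric distribution on `{0,…,κ}` with ratio `q`. -/
def tgMean (κ : ℕ∞) (q : ℝ) : ℝ :=
  if κ = ⊤ then q / (1 - q)
  else (∑ t ∈ Finset.range (κ.toNat + 1), (t : ℝ) * q ^ t) /
    (∑ t ∈ Finset.range (κ.toNat + 1), q ^ t)

/-- The parameter `q(x;κ)` of the truncated geometric distribution `TG(x;κ)` with mean `x`. -/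
def tgQ (κ : ℕ∞) (x : ℝ) : ℝ := sInf {q : ℝ | 0 ≤ q ∧ x ≤ tgMean κ q}

/-- The parameter `p(x;κ)` of the truncated geometric distribution `TG(x;κ)` with mean `x`. -/
def tgP (κ : ℕ∞) (x : ℝ) : ℝ :=
  if κ = ⊤ then 1 - tgQ κ x
  else (∑ t ∈ Finset.range (κ.toNat + 1), tgQ κ x ^ t)⁻¹

/-- The probability mass function of `TG(x;κ)`: `Pr[X=t] = p q^t` for `t ∈ {0,…,κ}`. -/
def tgPMF (κ : ℕ∞) (x : ℝ) (t : ℕ) : ℝ :=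
  if (t : ℕ∞) ≤ κ then tgP κ x * tgQ κ x ^ t else 0

/-- `H^max_κ(x)`: the (base-e) entropy of the truncated geometric distribution `TG(x;κ)`. -/
def Hmax (κ : ℕ∞) (x : ℝ) : ℝ := -∑' t : ℕ, tgPMF κ x t * Real.log (tgPMF κ x t)

/-- The `(κ+1)`-nomial coefficient `(n choose r)_κ`: the coefficient of `x^r` in
`(1+x+⋯+x^κ)^n`; for `κ = ∞` it is `(r+n-1).choose r`. -/
def knomial (κ : ℕ∞) (n r : ℕ) : ℕ :=
  if κ = ⊤ then (r + n - 1).choose r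
  else ((∑ t ∈ Finset.range (κ.toNat + 1), (Polynomial.X : Polynomial ℕ) ^ t) ^ n).coeff r

/-- The independence-heuristic estimate `I_κ(R,C)`. -/
def indepEst (κ : ℕ∞) {I J : Type*} [Fintype I] [Fintype J] (R : I → ℕ) (C : J → ℕ) : ℝ :=
  ((knomial κ (Fintype.card I * Fintype.card J) (∑ i, R i) : ℝ))⁻¹ *
    (∏ i, (knomial κ (Fintype.card J) (R i) : ℝ)) *
    ∏ j, (knomial κ (Fintype.card I) (C j) : ℝ)

/-- The transportation polytope `Π_κ(R,C)` of real matrices with entries in `[0,κ]`,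
row sums `R` and column sums `C`. -/
def transportPolytope (κ : ℕ∞) {m n : ℕ} (R : Fin m → ℕ) (C : Fin n → ℕ) :
    Set (Fin m → Fin n → ℝ) :=
  {Z | (∀ i j, 0 ≤ Z i j) ∧ (∀ i j, κ ≠ ⊤ → Z i j ≤ (κ.toNat : ℝ)) ∧
    (∀ i, ∑ j, Z i j = (R i : ℝ)) ∧ ∀ j, ∑ i, Z i j = (C j : ℝ)}

/-- The generating function `G(x,y) = ∏_{i,j} (1 + x_i y_j + ⋯ + (x_i y_j)^{k_{ij}})`. -/
def genFun {m n : ℕ} (K : Fin m → Fin n → ℕ) (x : Fin m → ℝ) (y : Fin n → ℝ) : ℝ :=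
  ∏ i, ∏ j, ∑ t ∈ Finset.range (K i j + 1), (x i * y j) ^ t

/-- The monomial `x^R = ∏_i x_i^{r_i}`. -/
def monom {m : ℕ} (x : Fin m → ℝ) (R : Fin m → ℕ) : ℝ := ∏ i, x i ^ R i

/-- The concave roof function `f_K(R,C)`: the supremum of `∑_t α_t ln T_K(R^t,C^t)` over
convex combinations of integer margins averaging to `(R,C)` (and `⊥ = -∞` if none exist). -/
def fK {m n : ℕ} (K : Fin m → Fin n → ℕ) (R : Fin m → ℝ) (C : Fin n → ℝ) : EReal :=
  sSup {v : EReal | ∃ (p : ℕ) (α : Fin p → ℝ)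
    (Rs : Fin p → Fin m → ℕ) (Cs : Fin p → Fin n → ℕ),
    1 ≤ p ∧ (∀ t, 0 ≤ α t) ∧ ∑ t, α t = 1 ∧
    (∀ i, ∑ t, α t * (Rs t i : ℝ) = R i) ∧ (∀ j, ∑ t, α t * (Cs t j : ℝ) = C j) ∧
    (∀ t, 0 < tableCount (fun i j => (K i j : ℕ∞)) (Rs t) (Cs t)) ∧
    v = ((∑ t, α t * Real.log (tableCount (fun i j => (K i j : ℕ∞)) (Rs t) (Cs t)) : ℝ) : EReal)}

/-- `e^x` for an extended real `x`, with `e^{-∞} = 0`. -/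
def expE (e : EReal) : ℝ := if e = ⊥ then 0 else Real.exp e.toReal

end

/-- The matrices of natural numbers bounded entrywise by `K`. -/
def tableBox {I J : Type*} [Fintype I] [Fintype J] [DecidableEq I] [DecidableEq J]
    (K : I → J → ℕ) : Finset (I → J → ℕ) :=
  Fintype.piFinset fun i => Fintype.piFinset fun j => Finset.range (K i j + 1)

/-- The row sums and column sums of a matrix. -/
def margins {I J : Type*} [Fintype I] [Fintype J] (A : I → J → ℕ) : (I → ℕ) × (J → ℕ) :=
  (fun i => ∑ j, A i j, fun j => ∑ i, A i j)

theorem tableCount_reindex {I J I' J' : Type*} [Fintype I] [Fintype J] [Fintype I'] [Fintype J']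
    (e : I ≃ I') (f : J ≃ J')
    (K : I' → J' → ℕ∞) (R : I' → ℕ) (C : J' → ℕ) :
    tableCount (fun i j => K (e i) (f j)) (fun i => R (e i)) (fun j => C (f j)) =
      tableCount K R C := by
  unfold tableCount
  symm
  refine Set.ncard_congr (fun A _ i j => A (e i) (f j)) ?_ ?_ ?_
  · rintro A ⟨h₁, h₂, h₃⟩
    refine ⟨fun i => ?_, fun j => ?_, fun i j => h₃ _ _⟩
    · exact (Equiv.sum_comp f (A (e i))).trans (h₁ _)
    · exact (Equiv.sum_comp e (fun i => A i (f j))).trans (h₂ _)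
  · intro A B _ _ h
    ext i j
    simpa using congrFun (congrFun h (e.symm i)) (f.symm j)
  · rintro A ⟨h₁, h₂, h₃⟩
    refine ⟨fun i j => A (e.symm i) (f.symm j), ⟨fun i => ?_, fun j => ?_, fun i j => ?_⟩, ?_⟩
    · simp [Equiv.sum_comp f.symm (A (e.symm i)), h₁]
    · simp [Equiv.sum_comp e.symm (fun i => A i (f.symm j)), h₂]
    · simpa using h₃ (e.symm i) (f.symm j)
    · simp

section General

variable {I J : Type*} [Fintype I] [Fintype J] [DecidableEq I] [DecidableEq J]

theorem mem_tableBox {K A : I → J → ℕ} : A ∈ tableBox K ↔ ∀ i j, A i j ≤ K i j := by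
  simp [tableBox]

theorem tableCount_eq_card (K : I → J → ℕ) (R : I → ℕ) (C : J → ℕ) :
    tableCount (fun i j => (K i j : ℕ∞)) R C = #{A ∈ tableBox K | margins A = (R, C)} := by
  rw [tableCount, ← Set.ncard_coe_finset]
  congr 1
  ext A
  simp only [Set.mem_ofPred_eq, Finset.coe_filter, mem_tableBox, margins, Prod.mk.injEq,
    funext_iff, Nat.cast_le]
  tauto

theorem prod_prod_geom_sum (K : I → J → ℕ) (x : I → ℝ) (y : J → ℝ) :
    ∏ i, ∏ j, ∑ t ∈ Finset.range (K i j + 1), (x i * y j) ^ t =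
      ∑ A ∈ tableBox K, (∏ i, x i ^ (margins A).1 i) * ∏ j, y j ^ (margins A).2 j := by
  simp_rw [Finset.prod_univ_sum]
  refine Finset.sum_congr rfl fun A _ => ?_
  simp_rw [mul_pow, Finset.prod_mul_distrib, margins, Finset.prod_pow_eq_pow_sum]
  congr 1
  rw [Finset.prod_comm]
  simp_rw [Finset.prod_pow_eq_pow_sum]

end General

section Cloned

variable {m n : ℕ} {P : Type*} [Fintype P] [DecidableEq P]

theorem genFun_pow (K : Fin m → Fin n → ℕ) (x : Fin m → ℝ) (y : Fin n → ℝ) :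
    genFun K x y ^ Fintype.card P ^ 2 =
      ∑ A ∈ tableBox (fun (a : P × Fin m) (b : P × Fin n) => K a.2 b.2),
        (∏ i, x i ^ ∑ p, (margins A).1 (p, i)) * ∏ j, y j ^ ∑ p, (margins A).2 (p, j) := by
  have h := prod_prod_geom_sum (fun (a : P × Fin m) (b : P × Fin n) => K a.2 b.2)
    (fun a => x a.2) (fun b => y b.2)
  simp_rw [Fintype.prod_prod_type_right, Finset.prod_pow_eq_pow_sum] at h
  rw [← h]
  simp [genFun, ← Finset.prod_pow, ← pow_mul, sq, Finset.prod_const]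

theorem genFun_pow_eq_sum_margins (K : Fin m → Fin n → ℕ) (x : Fin m → ℝ) (y : Fin n → ℝ) :
    genFun K x y ^ Fintype.card P ^ 2 =
      ∑ k ∈ (tableBox (fun (a : P × Fin m) (b : P × Fin n) => K a.2 b.2)).image margins,
        (tableCount (fun (a : P × Fin m) (b : P × Fin n) => (K a.2 b.2 : ℕ∞)) k.1 k.2 : ℝ) *
          ((∏ i, x i ^ ∑ p, k.1 (p, i)) * ∏ j, y j ^ ∑ p, k.2 (p, j)) := by
  rw [genFun_pow, ← Finset.sum_fiberwise_of_maps_to (fun A => Finset.mem_image_of_mem margins)]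
  refine Finset.sum_congr rfl fun k _ => ?_
  rw [tableCount_eq_card (fun (a : P × Fin m) (b : P × Fin n) => K a.2 b.2), ← nsmul_eq_mul]
  refine Finset.sum_eq_card_nsmul fun A hA => ?_
  rw [(Finset.mem_filter.mp hA).2]

theorem tableCount_le_genFun_div_pow (K : Fin m → Fin n → ℕ) (R : Fin m → ℕ) (C : Fin n → ℕ)
    {x : Fin m → ℝ} {y : Fin n → ℝ} (hx : ∀ i, 0 < x i) (hy : ∀ j, 0 < y j) (s : ℕ) :
    (tableCount (cloneMat s (fun i j => (K i j : ℕ∞))) (cloneVec s R) (cloneVec s C) : ℝ) ≤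
      (genFun K x y / (monom x R * monom y C)) ^ s ^ 2 := by
  have hpos : 0 < monom x R * monom y C :=
    mul_pos (Finset.prod_pos fun i _ => pow_pos (hx i) _)
      (Finset.prod_pos fun j _ => pow_pos (hy j) _)
  rw [div_pow, le_div_iff₀ (pow_pos hpos _)]
  have hT : tableCount (cloneMat s (fun i j => (K i j : ℕ∞))) (cloneVec s R) (cloneVec s C) =
      #{A ∈ tableBox (fun (a : Fin s × Fin m) (b : Fin s × Fin n) => K a.2 b.2) |
        margins A = (cloneVec s R, cloneVec s C)} :=
    tableCount_eq_card (fun (a : Fin s × Fin m) (b : Fin s × Fin n) => K a.2 b.2)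
      (cloneVec s R) (cloneVec s C)
  have h := genFun_pow (P := Fin s) K x y
  rw [Fintype.card_fin] at h
  rw [h, hT, ← nsmul_eq_mul]
  refine le_trans (le_of_eq ?_) (Finset.sum_le_sum_of_subset_of_nonneg
    (Finset.filter_subset (fun A => margins A = (cloneVec s R, cloneVec s C)) _) fun A _ _ => ?_)
  · refine (Finset.sum_eq_card_nsmul fun A hA => ?_).symm
    rw [(Finset.mem_filter.mp hA).2]
    simp only [cloneVec, monom, Finset.sum_const, Finset.card_univ, Fintype.card_fin, mul_pow,
      smul_eq_mul, ← Finset.prod_pow, ← pow_mul]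
    congr 1 <;> refine Finset.prod_congr rfl fun i _ => ?_ <;> ring
  · exact mul_nonneg (Finset.prod_nonneg fun i _ => pow_nonneg (hx i).le _)
      (Finset.prod_nonneg fun j _ => pow_nonneg (hy j).le _)

end Cloned

section Convexity

/-- A vector of weights balancing finitely many vectors `δ k` while keeping the average of `h`
at least `L` exists unless a linear functional rules it out. -/
theorem exists_balanced_weights {κ d : Type*} [Fintype κ] [Fintype d]
    (δ : κ → d → ℝ) (h : κ → ℝ) (k₀ : κ) (hk₀ : δ k₀ = 0) (L : ℝ)
    (H : ∀ θ : d → ℝ, ∃ k, L ≤ h k + ∑ e, θ e * δ k e) :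
    ∃ w ∈ stdSimplex ℝ κ, (∀ e, ∑ k, w k * δ k e = 0) ∧ L ≤ ∑ k, w k * h k := by
  classical
  by_contra! hcon
  let Φ : (κ → ℝ) →ₗ[ℝ] (d → ℝ) × ℝ :=
    { toFun := fun w => (fun e => ∑ k, w k * δ k e, ∑ k, w k * h k)
      map_add' := fun v w => by ext <;> simp [add_mul, Finset.sum_add_distrib]
      map_smul' := fun c w => by ext <;> simp [mul_assoc, Finset.mul_sum] }
  have hΦ : Continuous Φ := Φ.continuous_of_finiteDimensional
  have hΦs : ∀ k, Φ (Pi.single k 1) = (δ k, h k) := fun k => by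
    ext <;> simp [Φ, Pi.single_apply]
  have hdisj : Disjoint (Φ '' stdSimplex ℝ κ) ({0} ×ˢ Set.Ici L) := by
    rw [Set.disjoint_left]
    rintro _ ⟨w, hw, rfl⟩ ⟨h₁, h₂⟩
    exact absurd (hcon w hw fun e => congrFun h₁ e) (not_lt.mpr h₂)
  obtain ⟨f, u, v, hu, huv, hv⟩ := geometric_hahn_banach_compact_closed
    ((convex_stdSimplex ℝ κ).linear_image Φ) ((isCompact_stdSimplex ℝ κ).image hΦ)
    ((convex_singleton (0 : d → ℝ)).prod (convex_Ici L))
    (isClosed_singleton.prod isClosed_Ici) hdisj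
  set τ := f (0, 1) with hτ
  have hf : ∀ (a : d → ℝ) (t : ℝ), f (a, t) = ∑ e, f (Pi.single e 1, 0) * a e + t * τ := by
    intro a t
    have h₁ : ((a, t) : (d → ℝ) × ℝ) =
        ∑ e, a e • ((Pi.single e 1, 0) : (d → ℝ) × ℝ) + t • ((0, 1) : (d → ℝ) × ℝ) := by
      ext e
      · simp [Prod.fst_sum, Finset.sum_apply, Pi.single_apply]
      · simp [Prod.snd_sum]
    rw [h₁, map_add, map_sum, map_smul, smul_eq_mul]
    simp_rw [map_smul, smul_eq_mul, mul_comm, hτ]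
  have hray : ∀ t, L ≤ t → v < t * τ := fun t ht => by
    have := hv (0, t) ⟨rfl, ht⟩
    rw [hf] at this
    simpa using this
  have hpts : ∀ k, ∑ e, f (Pi.single e 1, 0) * δ k e + h k * τ < u := fun k => by
    have := hu _ ⟨_, single_mem_stdSimplex ℝ k, rfl⟩
    rwa [hΦs, hf] at this
  have hk : h k₀ * τ < u := by simpa [hk₀] using hpts k₀
  have hτpos : 0 < τ := by
    have h₁ := hray (max L (h k₀)) (le_max_left _ _)
    have h₂ : 0 < (max L (h k₀) - h k₀) * τ := by linarith
    exact pos_of_mul_pos_right h₂ (sub_nonneg.mpr (le_max_right _ _))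
  obtain ⟨k, hk⟩ := H fun e => f (Pi.single e 1, 0) / τ
  have h₁ := hpts k
  have h₂ := hray L le_rfl
  have h₃ : ∑ e, f (Pi.single e 1, 0) / τ * δ k e = (∑ e, f (Pi.single e 1, 0) * δ k e) / τ := by
    rw [Finset.sum_div]
    exact Finset.sum_congr rfl fun e _ => by ring
  rw [h₃] at hk
  have h₄ := mul_le_mul_of_nonneg_right hk hτpos.le
  rw [add_mul, div_mul_cancel₀ _ hτpos.ne'] at h₄
  linarith

/-- Real weights balancing integer vectors can be replaced by a finite sequence of these vectors
with sum zero. -/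
theorem exists_balanced_sequence {κ d : Type*} [Fintype κ] [Finite d]
    (δ : κ → d → ℤ) (h : κ → ℝ) (hh : ∀ k, 0 ≤ h k) {w : κ → ℝ} (hw : w ∈ stdSimplex ℝ κ)
    (hδ : ∀ e, ∑ k, w k * (δ k e : ℝ) = 0) {L : ℝ} (hL : L < ∑ k, w k * h k) :
    ∃ (M : ℕ) (τ : Fin M → κ), 0 < M ∧ (∀ e, ∑ z, δ (τ z) e = 0) ∧ M * L ≤ ∑ z, h (τ z) := by
  classical
  have := Fintype.ofFinite d
  let S : ℕ → d → ℤ := fun N e => ∑ k, (⌊(N : ℝ) * w k⌋₊ : ℤ) * δ k e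
  let B : d → ℤ := fun e => ∑ k, |δ k e|
  have hS : ∀ N, S N ∈ Set.Icc (-B) B := by
    suffices ∀ N e, |S N e| ≤ B e from
      fun N => ⟨fun e => (abs_le.mp (this N e)).1, fun e => (abs_le.mp (this N e)).2⟩
    intro N e
    have h₁ : (S N e : ℝ) = ∑ k, ((⌊(N : ℝ) * w k⌋₊ : ℝ) - N * w k) * (δ k e : ℝ) := by
      simp_rw [sub_mul, Finset.sum_sub_distrib, mul_assoc, ← Finset.mul_sum, hδ]
      simp [S]
    have h₂ : |(S N e : ℝ)| ≤ B e := by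
      rw [h₁]
      push_cast [B]
      refine (Finset.abs_sum_le_sum_abs _ _).trans (Finset.sum_le_sum fun k _ => ?_)
      rw [abs_mul]
      refine mul_le_of_le_one_left (abs_nonneg _) (abs_le.mpr ⟨?_, ?_⟩)
      · linarith [Nat.lt_floor_add_one ((N : ℝ) * w k)]
      · linarith [Nat.floor_le (mul_nonneg N.cast_nonneg (hw.1 k))]
    exact_mod_cast h₂
  have : Finite (Set.Icc (-B) B) := (Set.finite_Icc _ _).to_subtype
  obtain ⟨c, hc⟩ := Finite.exists_infinite_fiber fun N => (⟨S N, hS N⟩ : Set.Icc (-B) B)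
  have hc' := Set.infinite_coe_iff.mp hc
  obtain ⟨N₁, hN₁⟩ := hc'.nonempty
  set q : ℝ := (Fintype.card κ : ℝ)
  set Λ : ℝ := ∑ k, w k * h k with hΛ
  set b : ℝ := (∑ k, h k + q * |L|) / (Λ - L) + q + 1 with hb
  obtain ⟨N₂, hN₂, hlt⟩ := hc'.exists_gt (N₁ + ⌈b⌉₊)
  have hΔ : b ≤ (N₂ : ℝ) - N₁ := by
    have h₁ : ((N₁ + ⌈b⌉₊ : ℕ) : ℝ) < N₂ := by exact_mod_cast hlt
    push_cast at h₁
    linarith [Nat.le_ceil b]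
  set Δ : ℝ := (N₂ : ℝ) - N₁ with hΔ'
  have hle : ∀ k, ⌊(N₁ : ℝ) * w k⌋₊ ≤ ⌊(N₂ : ℝ) * w k⌋₊ := fun k =>
    Nat.floor_le_floor (mul_le_mul_of_nonneg_right (by exact_mod_cast (by omega)) (hw.1 k))
  let ν : κ → ℕ := fun k => ⌊(N₂ : ℝ) * w k⌋₊ - ⌊(N₁ : ℝ) * w k⌋₊
  have hν : ∀ k, Δ * w k - 1 ≤ ν k ∧ (ν k : ℝ) ≤ Δ * w k + 1 := fun k => by
    have h₁ := Nat.lt_floor_add_one ((N₁ : ℝ) * w k)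
    have h₂ := Nat.lt_floor_add_one ((N₂ : ℝ) * w k)
    have h₃ := Nat.floor_le (mul_nonneg N₁.cast_nonneg (hw.1 k))
    have h₄ := Nat.floor_le (mul_nonneg N₂.cast_nonneg (hw.1 k))
    simp only [ν, Nat.cast_sub (hle k), hΔ', sub_mul]
    constructor <;> linarith
  have hsum : ∀ e, ∑ k, (ν k : ℤ) * δ k e = 0 := fun e => by
    have h₁ : S N₂ = S N₁ :=
      congrArg Subtype.val ((show _ = c from hN₂).trans (show _ = c from hN₁).symm)
    have h₂ := congrFun h₁ e
    simp only [ν, Nat.cast_sub (hle _), sub_mul, Finset.sum_sub_distrib]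
    exact sub_eq_zero.mpr h₂
  have htot : Δ - q ≤ ((∑ k, ν k : ℕ) : ℝ) ∧ ((∑ k, ν k : ℕ) : ℝ) ≤ Δ + q := by
    have h₁ := Finset.sum_le_sum fun k (_ : k ∈ Finset.univ) => (hν k).1
    have h₂ := Finset.sum_le_sum fun k (_ : k ∈ Finset.univ) => (hν k).2
    simp only [Finset.sum_sub_distrib, Finset.sum_add_distrib, ← Finset.mul_sum, hw.2] at h₁ h₂
    push_cast
    simp only [Finset.sum_const, Finset.card_univ, nsmul_eq_mul, mul_one] at h₁ h₂
    exact ⟨h₁, h₂⟩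
  have hh' : Δ * Λ - ∑ k, h k ≤ ∑ k, (ν k : ℝ) * h k := by
    rw [hΛ, Finset.mul_sum, ← Finset.sum_sub_distrib]
    refine Finset.sum_le_sum fun k _ => ?_
    have := mul_le_mul_of_nonneg_right (hν k).1 (hh k)
    linarith
  have hbig : ∑ k, h k + q * |L| ≤ Δ * (Λ - L) := by
    rw [← div_le_iff₀ (sub_pos.mpr hL)]
    have : (0 : ℝ) ≤ q := Nat.cast_nonneg _
    linarith
  have hqb : 0 ≤ (∑ k, h k + q * |L|) / (Λ - L) :=
    div_nonneg (add_nonneg (Finset.sum_nonneg fun k _ => hh k)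
      (mul_nonneg (Nat.cast_nonneg _) (abs_nonneg _))) (sub_pos.mpr hL).le
  have hseq : ∀ {α : Type} [AddCommMonoid α] (g : κ → α),
      ∑ z : Fin (∑ k, ν k), g ((Fintype.equivFinOfCardEq (α := Σ k, Fin (ν k)) (by simp)).symm z).1
        = ∑ k, ν k • g k := fun g => by
    rw [Equiv.sum_comp _ (fun z : Σ k, Fin (ν k) => g z.1), Fintype.sum_sigma]
    simp
  refine ⟨∑ k, ν k,
    fun z => ((Fintype.equivFinOfCardEq (α := Σ k, Fin (ν k)) (by simp)).symm z).1, ?_, ?_, ?_⟩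
  · have : (0 : ℝ) < ((∑ k, ν k : ℕ) : ℝ) := by linarith [htot.1]
    exact_mod_cast this
  · intro e
    rw [hseq fun k => δ k e]
    simpa using hsum e
  · rw [hseq h]
    simp only [nsmul_eq_mul]
    refine le_trans ?_ hh'
    have h₁ : (((∑ k, ν k : ℕ) : ℝ) - Δ) * L ≤ q * |L| := by
      refine (le_abs_self _).trans ?_
      rw [abs_mul]
      exact mul_le_mul_of_nonneg_right (abs_le.mpr ⟨by linarith [htot.1], by linarith [htot.2]⟩)
        (abs_nonneg _)
    linarith

end Convexity

section Assembly

variable {m n : ℕ}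

/-- Tables indexed by pairs of blocks are assembled into a larger table: the block at position
`(u, u')` is translated cyclically in both directions, and the remaining `ρ` rows and columns of
blocks are filled with copies of `A₀`. -/
def cyclicAssembly {U V : Type*} [Add V] (σ : U → V) (ρ : ℕ) (A₀ : Fin m → Fin n → ℕ)
    (A : U → U → V × Fin m → V × Fin n → ℕ) :
    ((U × V) ⊕ Fin ρ) × Fin m → ((U × V) ⊕ Fin ρ) × Fin n → ℕ
  | (.inl (u, v), i), (.inl (u', v'), j) => A u u' (v + σ u', i) (v' + σ u, j)
  | (.inl _, i), (.inr _, j) => A₀ i j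
  | (.inr _, i), (.inl _, j) => A₀ i j
  | (.inr _, i), (.inr _, j) => A₀ i j

theorem cyclicAssembly_injective {U V : Type*} [AddGroup V] (σ : U → V) (ρ : ℕ)
    (A₀ : Fin m → Fin n → ℕ) : Function.Injective (cyclicAssembly σ ρ A₀) := by
  intro A B h
  ext u u' ⟨v, i⟩ ⟨v', j⟩
  simpa [cyclicAssembly] using
    congrFun (congrFun h (.inl (u, v - σ u'), i)) (.inl (u', v' - σ u), j)

theorem exists_table_of_tableCount_pos {K : Fin m → Fin n → ℕ} {R : Fin m → ℕ} {C : Fin n → ℕ}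
    (hT : 0 < tableCount (fun i j => (K i j : ℕ∞)) R C) :
    ∃ A : Fin m → Fin n → ℕ,
      (∀ i j, A i j ≤ K i j) ∧ (∀ i, ∑ j, A i j = R i) ∧ ∀ j, ∑ i, A i j = C j := by
  rw [tableCount_eq_card, Finset.card_pos] at hT
  obtain ⟨A, hA⟩ := hT
  rw [Finset.mem_filter, mem_tableBox, margins, Prod.mk.injEq] at hA
  exact ⟨A, hA.1, congrFun hA.2.1, congrFun hA.2.2⟩

/-- The cloned bound matrix admits tables with the cloned margins. -/
theorem cloned_margins_mem_image {P : Type*} [Fintype P] [DecidableEq P]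
    {K : Fin m → Fin n → ℕ} {R : Fin m → ℕ} {C : Fin n → ℕ}
    (hT : 0 < tableCount (fun i j => (K i j : ℕ∞)) R C) :
    ((fun a => Fintype.card P * R a.2, fun b => Fintype.card P * C b.2) :
      (P × Fin m → ℕ) × (P × Fin n → ℕ)) ∈
      (tableBox (fun (a : P × Fin m) (b : P × Fin n) => K a.2 b.2)).image margins := by
  obtain ⟨A, h₁, h₂, h₃⟩ := exists_table_of_tableCount_pos hT
  refine Finset.mem_image.mpr ⟨fun a b => A a.2 b.2, mem_tableBox.mpr fun a b => h₁ _ _, ?_⟩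
  simp [margins, Fintype.sum_prod_type, h₂, h₃]

theorem tableCount_pos_of_mem_image {P : Type*} [Fintype P] [DecidableEq P]
    {K : Fin m → Fin n → ℕ} {k : (P × Fin m → ℕ) × (P × Fin n → ℕ)}
    (hk : k ∈ (tableBox (fun (a : P × Fin m) (b : P × Fin n) => K a.2 b.2)).image margins) :
    0 < tableCount (fun (a : P × Fin m) (b : P × Fin n) => (K a.2 b.2 : ℕ∞)) k.1 k.2 := by
  obtain ⟨A, hA, rfl⟩ := Finset.mem_image.mp hk
  rw [tableCount_eq_card (fun (a : P × Fin m) (b : P × Fin n) => K a.2 b.2), Finset.card_pos]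
  exact ⟨A, Finset.mem_filter.mpr ⟨hA, rfl⟩⟩

/-- Margins that average to cloned ones give a lower bound for the number of tables with
cloned margins. -/
theorem prod_tableCount_pow_le {K : Fin m → Fin n → ℕ} {R : Fin m → ℕ} {C : Fin n → ℕ}
    (hT : 0 < tableCount (fun i j => (K i j : ℕ∞)) R C)
    {Z V : Type*} [AddCommGroup Z] [Fintype Z] [AddCommGroup V] [Fintype V]
    (τ : Z → (V × Fin m → ℕ) × (V × Fin n → ℕ))
    (hR : ∀ i, ∑ z, ∑ v, (τ z).1 (v, i) = Fintype.card Z * Fintype.card V ^ 2 * R i)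
    (hC : ∀ j, ∑ z, ∑ v, (τ z).2 (v, j) = Fintype.card Z * Fintype.card V ^ 2 * C j)
    {l ρ s : ℕ} (hs : s = l * (Fintype.card Z * Fintype.card V ^ 2) + ρ) :
    (∏ z, tableCount (fun (a : V × Fin m) (b : V × Fin n) => (K a.2 b.2 : ℕ∞))
        (τ z).1 (τ z).2) ^ ((l * Fintype.card V) ^ 2 * Fintype.card Z) ≤
      tableCount (cloneMat s (fun i j => (K i j : ℕ∞))) (cloneVec s R) (cloneVec s C) := by
  classical
  obtain ⟨A₀, h₁, h₂, h₃⟩ := exists_table_of_tableCount_pos hT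
  let U := Fin l × Z × V
  let P := (U × V) ⊕ Fin ρ
  have hP : Fintype.card P = s := by
    simp only [P, U, Fintype.card_sum, Fintype.card_prod, Fintype.card_fin, hs]
    ring
  let e : Fin s ≃ P := (Fintype.equivFinOfCardEq hP).symm
  have hcount : tableCount (cloneMat s (fun i j => (K i j : ℕ∞))) (cloneVec s R) (cloneVec s C) =
      tableCount (fun (a : P × Fin m) (b : P × Fin n) => (K a.2 b.2 : ℕ∞))
        (fun a => s * R a.2) (fun b => s * C b.2) :=
    tableCount_reindex (e.prodCongr (Equiv.refl (Fin m))) (e.prodCongr (Equiv.refl (Fin n)))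
      (fun (a : P × Fin m) (b : P × Fin n) => (K a.2 b.2 : ℕ∞))
      (fun a => s * R a.2) (fun b => s * C b.2)
  let F : Z → Finset (V × Fin m → V × Fin n → ℕ) := fun z =>
    {A ∈ tableBox (fun (a : V × Fin m) (b : V × Fin n) => K a.2 b.2) | margins A = τ z}
  have hF : ∀ z, tableCount (fun (a : V × Fin m) (b : V × Fin n) => (K a.2 b.2 : ℕ∞))
      (τ z).1 (τ z).2 = #(F z) := fun z =>
    tableCount_eq_card (fun (a : V × Fin m) (b : V × Fin n) => K a.2 b.2) (τ z).1 (τ z).2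
  have hshift : ∀ {α : Type} [CommMonoid α] (f : Z → α) (z : Z), ∏ z', f (z + z') = ∏ z', f z' :=
    fun f z => Equiv.prod_comp (Equiv.addLeft z) f
  have hcard : #(Fintype.piFinset fun u : U => Fintype.piFinset fun u' : U => F (u.2.1 + u'.2.1)) =
      (∏ z, #(F z)) ^ ((l * Fintype.card V) ^ 2 * Fintype.card Z) := by
    have h : ∀ z : Z, ∏ u' : U, #(F (z + u'.2.1)) = (∏ z, #(F z)) ^ (l * Fintype.card V) :=
      fun z => by
        simp only [U, Fintype.prod_prod_type, Finset.prod_const, Finset.card_univ,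
          Fintype.card_fin, Finset.prod_pow]
        rw [hshift fun z => #(F z), ← pow_mul, mul_comm]
    simp only [Fintype.card_piFinset, h, Finset.prod_const, Finset.card_univ, ← pow_mul]
    congr 1
    simp only [U, Fintype.card_prod, Fintype.card_fin]
    ring
  simp_rw [hcount, hF]
  rw [← hcard, tableCount_eq_card (fun (a : P × Fin m) (b : P × Fin n) => K a.2 b.2)]
  refine Finset.card_le_card_of_injOn (cyclicAssembly (fun u : U => u.2.2) ρ A₀) ?_
    (cyclicAssembly_injective _ _ _).injOn
  intro A hA
  have hA' : ∀ u u', A u u' ∈ F (u.2.1 + u'.2.1) := by simpa using hA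
  have hbox : ∀ u u' a b, A u u' a b ≤ K a.2 b.2 := fun u u' =>
    mem_tableBox.mp (Finset.mem_filter.mp (hA' u u')).1
  have hmar : ∀ u u', margins (A u u') = τ (u.2.1 + u'.2.1) := fun u u' =>
    (Finset.mem_filter.mp (hA' u u')).2
  have hrow : ∀ u u' v i, ∑ v', ∑ j, A u u' (v, i) (v', j) = (τ (u.2.1 + u'.2.1)).1 (v, i) :=
    fun u u' v i => by
      rw [← hmar]
      exact (Fintype.sum_prod_type fun b => A u u' (v, i) b).symm
  have hcol : ∀ u u' v j, ∑ v', ∑ i, A u u' (v', i) (v, j) = (τ (u.2.1 + u'.2.1)).2 (v, j) :=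
    fun u u' v j => by
      rw [← hmar]
      exact (Fintype.sum_prod_type fun a => A u u' a (v, j)).symm
  have hadd : ∀ (f : V → ℕ) (v : V), ∑ v', f (v' + v) = ∑ v', f v' :=
    fun f v => Equiv.sum_comp (Equiv.addRight v) f
  have hadd' : ∀ (f : V → ℕ) (v : V), ∑ v', f (v + v') = ∑ v', f v' :=
    fun f v => Equiv.sum_comp (Equiv.addLeft v) f
  have haddZ : ∀ (f : Z → ℕ) (z : Z), ∑ z', f (z + z') = ∑ z', f z' :=
    fun f z => Equiv.sum_comp (Equiv.addLeft z) f
  refine Finset.mem_coe.mpr (Finset.mem_filter.mpr ⟨mem_tableBox.mpr ?_, Prod.ext ?_ ?_⟩)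
  · rintro ⟨⟨u, v⟩ | r, i⟩ ⟨⟨u', v'⟩ | r', j⟩
    · exact hbox _ _ _ _
    all_goals exact h₁ i j
  · ext ⟨⟨u, v⟩ | r, i⟩
    · have h : ∑ u' : U, ∑ v', ∑ j, A u u' (v + u'.2.2, i) (v' + u.2.2, j) =
          l * (Fintype.card Z * Fintype.card V ^ 2) * R i := by
        have h₀ : ∀ u' : U, ∑ v', ∑ j, A u u' (v + u'.2.2, i) (v' + u.2.2, j) =
            (τ (u.2.1 + u'.2.1)).1 (v + u'.2.2, i) := fun u' =>
          (hadd (fun v' => ∑ j, A u u' (v + u'.2.2, i) (v', j)) _).trans (hrow _ _ _ _)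
        have h₄ : ∑ z, ∑ w, (τ (u.2.1 + z)).1 (v + w, i) =
            Fintype.card Z * Fintype.card V ^ 2 * R i :=
          (Finset.sum_congr rfl fun z _ =>
            hadd' (fun w => (τ (u.2.1 + z)).1 (w, i)) v).trans
            ((haddZ (fun z => ∑ w, (τ z).1 (w, i)) _).trans (hR i))
        simp only [h₀, U, Fintype.sum_prod_type, h₄]
        simp [mul_assoc]
      simp only [margins, cyclicAssembly, P, Fintype.sum_prod_type, Fintype.sum_sum_type, h, h₂]
      simp [hs, add_mul]
    · simp only [margins, P, Fintype.sum_prod_type, Fintype.sum_sum_type, cyclicAssembly, h₂]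
      simp only [Finset.sum_const, Finset.card_univ, U, Fintype.card_prod, Fintype.card_fin, hs,
        smul_eq_mul]
      ring
  · ext ⟨⟨u, v⟩ | r, j⟩
    · have h : ∑ u' : U, ∑ v', ∑ i, A u' u (v' + u.2.2, i) (v + u'.2.2, j) =
          l * (Fintype.card Z * Fintype.card V ^ 2) * C j := by
        have h₀ : ∀ u' : U, ∑ v', ∑ i, A u' u (v' + u.2.2, i) (v + u'.2.2, j) =
            (τ (u.2.1 + u'.2.1)).2 (v + u'.2.2, j) := fun u' => by
          rw [add_comm u.2.1]
          exact (hadd (fun v' => ∑ i, A u' u (v', i) (v + u'.2.2, j)) _).trans (hcol _ _ _ _)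
        have h₄ : ∑ z, ∑ w, (τ (u.2.1 + z)).2 (v + w, j) =
            Fintype.card Z * Fintype.card V ^ 2 * C j :=
          (Finset.sum_congr rfl fun z _ =>
            hadd' (fun w => (τ (u.2.1 + z)).2 (w, j)) v).trans
            ((haddZ (fun z => ∑ w, (τ z).2 (w, j)) _).trans (hC j))
        simp only [h₀, U, Fintype.sum_prod_type, h₄]
        simp [mul_assoc]
      simp only [margins, cyclicAssembly, P, Fintype.sum_prod_type, Fintype.sum_sum_type, h, h₃]
      simp [hs, add_mul]
    · simp only [margins, P, Fintype.sum_prod_type, Fintype.sum_sum_type, cyclicAssembly, h₃]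
      simp only [Finset.sum_const, Finset.card_univ, U, Fintype.card_prod, Fintype.card_fin, hs,
        smul_eq_mul]
      ring

end Assembly

section Asymptotics

variable {m n : ℕ}

theorem exists_pow_lt_exp (D d : ℕ) {ε : ℝ} (hε : 0 < ε) :
    ∃ N : ℕ, 0 < N ∧ (((N * D + 1) ^ (N * d) : ℕ) : ℝ) < Real.exp ((N : ℝ) ^ 2 * ε) := by
  obtain ⟨q, hq⟩ := exists_nat_gt (2 * d * (D + 1) / ε)
  have hq₀ : (0 : ℝ) < q := lt_of_le_of_lt (by positivity) hq
  have hq₁ : (1 : ℝ) ≤ q := by exact_mod_cast (by exact_mod_cast hq₀ : 0 < q)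
  refine ⟨q ^ 2, pow_pos (by exact_mod_cast hq₀) 2, ?_⟩
  have hy : (q : ℝ) ^ 2 * D + 1 ≤ (q * (D + 1)) ^ 2 := by
    have hD : (0 : ℝ) ≤ D := D.cast_nonneg
    nlinarith [mul_nonneg (sq_nonneg (q : ℝ)) hD, mul_nonneg (sq_nonneg (q : ℝ)) (sq_nonneg (D : ℝ))]
  have hexp : (q : ℝ) ^ 2 * D + 1 ≤ Real.exp (2 * (q * (D + 1))) := by
    refine hy.trans ?_
    rw [two_mul, Real.exp_add, ← sq]
    exact pow_le_pow_left₀ (by positivity) (by linarith [Real.add_one_le_exp ((q : ℝ) * (D + 1))]) 2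
  push_cast
  calc ((q : ℝ) ^ 2 * D + 1) ^ (q ^ 2 * d) ≤ Real.exp (2 * (q * (D + 1))) ^ (q ^ 2 * d) :=
        pow_le_pow_left₀ (by positivity) hexp _
    _ = Real.exp ((q : ℝ) ^ 3 * (2 * d * (D + 1))) := by
        rw [← Real.exp_nat_mul]
        push_cast
        ring_nf
    _ < _ := by
        refine Real.exp_lt_exp.mpr ?_
        rw [div_lt_iff₀ hε] at hq
        calc (q : ℝ) ^ 3 * (2 * d * (D + 1)) < (q : ℝ) ^ 3 * (q * ε) :=
              mul_lt_mul_of_pos_left hq (by positivity)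
          _ = _ := by ring

theorem card_image_margins_le (K : Fin m → Fin n → ℕ) (N : ℕ) :
    #((tableBox (fun (a : Fin N × Fin m) (b : Fin N × Fin n) => K a.2 b.2)).image margins) ≤
      (N * (∑ i, ∑ j, K i j) + 1) ^ (N * (m + n)) := by
  set D := ∑ i, ∑ j, K i j
  have hsub : (tableBox (fun (a : Fin N × Fin m) (b : Fin N × Fin n) => K a.2 b.2)).image margins ⊆
      (Fintype.piFinset fun _ => Finset.range (N * D + 1)) ×ˢ
        (Fintype.piFinset fun _ => Finset.range (N * D + 1)) := by
    intro k hk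
    obtain ⟨A, hA, rfl⟩ := Finset.mem_image.mp hk
    rw [mem_tableBox] at hA
    simp only [Finset.mem_product, Fintype.mem_piFinset, Finset.mem_range, Nat.lt_succ_iff, margins]
    constructor
    · rintro ⟨p, i⟩
      refine (Finset.sum_le_sum fun b _ => hA (p, i) b).trans ?_
      rw [Fintype.sum_prod_type]
      simp only [Finset.sum_const, Finset.card_univ, Fintype.card_fin, smul_eq_mul]
      exact Nat.mul_le_mul_left _
        (Finset.single_le_sum (f := fun i => ∑ j, K i j) (fun _ _ => Nat.zero_le _)
          (Finset.mem_univ i))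
    · rintro ⟨q, j⟩
      refine (Finset.sum_le_sum fun a _ => hA a (q, j)).trans ?_
      rw [Fintype.sum_prod_type]
      simp only [Finset.sum_const, Finset.card_univ, Fintype.card_fin, smul_eq_mul]
      exact Nat.mul_le_mul_left _ (Finset.sum_le_sum fun i _ =>
        Finset.single_le_sum (f := fun j => K i j) (fun _ _ => Nat.zero_le _) (Finset.mem_univ j))
  refine (Finset.card_le_card hsub).trans (le_of_eq ?_)
  simp only [Finset.card_product, Fintype.card_piFinset, Finset.card_range, Finset.prod_const,
    Finset.card_univ, Fintype.card_prod, Fintype.card_fin]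
  rw [← pow_add, mul_add]

/-- If `genFun` is bounded below by a multiple of the monomial, then there are margins that
average to cloned ones and admit many tables. -/
theorem exists_margins_sequence {K : Fin m → Fin n → ℕ} {R : Fin m → ℕ} {C : Fin n → ℕ}
    (hT : 0 < tableCount (fun i j => (K i j : ℕ∞)) R C) {L L' : ℝ} (hL : L' < L)
    (hG : ∀ (x : Fin m → ℝ) (y : Fin n → ℝ), (∀ i, 0 < x i) → (∀ j, 0 < y j) →
      Real.exp L * (monom x R * monom y C) ≤ genFun K x y) :
    ∃ (N M : ℕ) (τ : Fin M → (Fin N × Fin m → ℕ) × (Fin N × Fin n → ℕ)), 0 < N ∧ 0 < M ∧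
      (∀ z, 0 < tableCount (fun (a : Fin N × Fin m) (b : Fin N × Fin n) => (K a.2 b.2 : ℕ∞))
        (τ z).1 (τ z).2) ∧
      (∀ i, ∑ z, ∑ v, (τ z).1 (v, i) = M * N ^ 2 * R i) ∧
      (∀ j, ∑ z, ∑ v, (τ z).2 (v, j) = M * N ^ 2 * C j) ∧
      M * N ^ 2 * L' ≤ ∑ z, Real.log (tableCount
        (fun (a : Fin N × Fin m) (b : Fin N × Fin n) => (K a.2 b.2 : ℕ∞)) (τ z).1 (τ z).2) := by
  classical
  obtain ⟨L'', h', h''⟩ := exists_between hL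
  obtain ⟨N, hN, hlt⟩ := exists_pow_lt_exp (∑ i, ∑ j, K i j) (m + n) (sub_pos.mpr h'')
  set T : (Fin N × Fin m → ℕ) × (Fin N × Fin n → ℕ) → ℕ := fun k =>
    tableCount (fun (a : Fin N × Fin m) (b : Fin N × Fin n) => (K a.2 b.2 : ℕ∞)) k.1 k.2
  set S := (tableBox (fun (a : Fin N × Fin m) (b : Fin N × Fin n) => K a.2 b.2)).image margins
  have hTpos : ∀ k ∈ S, 0 < T k := fun k hk => tableCount_pos_of_mem_image hk
  let δ : S → Fin m ⊕ Fin n → ℤ := fun k =>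
    Sum.elim (fun i => ∑ v, (k.1.1 (v, i) : ℤ) - N ^ 2 * R i)
      (fun j => ∑ v, (k.1.2 (v, j) : ℤ) - N ^ 2 * C j)
  let h : S → ℝ := fun k => Real.log (T k)
  have hh : ∀ k, 0 ≤ h k := fun k => Real.log_natCast_nonneg _
  have hbase := cloned_margins_mem_image (P := Fin N) hT
  have hNsq : (0 : ℝ) < (N : ℝ) ^ 2 := by positivity
  have hfun : ∀ θ : Fin m ⊕ Fin n → ℝ,
      ∃ k, (N : ℝ) ^ 2 * L'' ≤ h k + ∑ e, θ e * (δ k e : ℝ) := by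
    intro θ
    by_contra! hcon
    let x : Fin m → ℝ := fun i => Real.exp (θ (.inl i))
    let y : Fin n → ℝ := fun j => Real.exp (θ (.inr j))
    set W := monom x R * monom y C with hW
    have hWexp : W = Real.exp (∑ i, θ (.inl i) * R i + ∑ j, θ (.inr j) * C j) := by
      simp only [hW, monom, x, y, ← Real.exp_nat_mul, ← Real.exp_sum, ← Real.exp_add, mul_comm]
    have hWpos : 0 < W := hWexp ▸ Real.exp_pos _
    have hterm : ∀ k ∈ S, (T k : ℝ) *
        ((∏ i, x i ^ ∑ p, k.1 (p, i)) * ∏ j, y j ^ ∑ p, k.2 (p, j)) ≤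
          Real.exp ((N : ℝ) ^ 2 * L'') * W ^ N ^ 2 := by
      intro k hk
      have h₁ : (T k : ℝ) *
          ((∏ i, x i ^ ∑ p, k.1 (p, i)) * ∏ j, y j ^ ∑ p, k.2 (p, j)) =
            Real.exp (h ⟨k, hk⟩ + ∑ e, θ e * (δ ⟨k, hk⟩ e : ℝ)) * W ^ N ^ 2 := by
        rw [← Real.exp_log (Nat.cast_pos.mpr (hTpos k hk) : (0 : ℝ) < T k), hWexp]
        simp only [x, y, ← Real.exp_nat_mul, ← Real.exp_sum, ← Real.exp_add]
        congr 1
        simp only [Fintype.sum_sum_type, δ, Sum.elim_inl, Sum.elim_inr, h]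
        push_cast
        simp only [mul_sub, Finset.sum_sub_distrib, mul_add, Finset.mul_sum,
          mul_comm, mul_left_comm, mul_assoc]
        ring
      rw [h₁]
      exact mul_le_mul_of_nonneg_right (Real.exp_le_exp.mpr (hcon ⟨k, hk⟩).le) (by positivity)
    have h₁ : genFun K x y ^ N ^ 2 ≤ #S * (Real.exp ((N : ℝ) ^ 2 * L'') * W ^ N ^ 2) := by
      have := genFun_pow_eq_sum_margins (P := Fin N) K x y
      rw [Fintype.card_fin] at this
      rw [this, ← nsmul_eq_mul]
      exact Finset.sum_le_card_nsmul _ _ _ hterm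
    have h₂ := pow_le_pow_left₀ (by positivity)
      (hG x y (fun i => Real.exp_pos _) fun j => Real.exp_pos _) (N ^ 2)
    rw [← hW, mul_pow, ← Real.exp_nat_mul] at h₂
    push_cast at h₂
    have h₃ : Real.exp ((N : ℝ) ^ 2 * L) ≤ #S * Real.exp ((N : ℝ) ^ 2 * L'') := by
      refine le_of_mul_le_mul_right ?_ (pow_pos hWpos (N ^ 2))
      rw [mul_assoc]
      exact h₂.trans h₁
    have h₄ : (#S : ℝ) < Real.exp ((N : ℝ) ^ 2 * (L - L'')) :=
      lt_of_le_of_lt (by exact_mod_cast card_image_margins_le K N) hlt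
    have h₅ := mul_lt_mul_of_pos_right h₄ (Real.exp_pos ((N : ℝ) ^ 2 * L''))
    rw [← Real.exp_add, ← mul_add, sub_add_cancel] at h₅
    linarith
  obtain ⟨w, hw, hwδ, hwh⟩ := exists_balanced_weights (fun k e => (δ k e : ℝ)) h ⟨_, hbase⟩
    (by ext (i | j) <;> simp [δ] <;> ring) _ hfun
  obtain ⟨M, τ, hM, hτδ, hτh⟩ := exists_balanced_sequence δ h hh hw hwδ
    (lt_of_lt_of_le (mul_lt_mul_of_pos_left h' hNsq) hwh)
  refine ⟨N, M, fun z => (τ z).1, hN, hM, fun z => hTpos _ (τ z).2, fun i => ?_, fun j => ?_, ?_⟩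
  · have := hτδ (.inl i)
    simp only [δ, Sum.elim_inl, Finset.sum_sub_distrib, Finset.sum_const, Finset.card_univ,
      Fintype.card_fin, nsmul_eq_mul] at this
    zify
    linarith
  · have := hτδ (.inr j)
    simp only [δ, Sum.elim_inr, Finset.sum_sub_distrib, Finset.sum_const, Finset.card_univ,
      Fintype.card_fin, nsmul_eq_mul] at this
    zify
    linarith
  · rw [mul_assoc]
    exact hτh

/-- The asymptotic lower bound for the number of tables with cloned margins. -/
theorem eventually_le_log_tableCount {K : Fin m → Fin n → ℕ} {R : Fin m → ℕ} {C : Fin n → ℕ}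
    (hT : 0 < tableCount (fun i j => (K i j : ℕ∞)) R C) {L L' : ℝ} (hL : L' < L)
    (hG : ∀ (x : Fin m → ℝ) (y : Fin n → ℝ), (∀ i, 0 < x i) → (∀ j, 0 < y j) →
      Real.exp L * (monom x R * monom y C) ≤ genFun K x y) :
    ∀ᶠ s : ℕ in Filter.atTop, (s : ℝ) ^ 2 * L' ≤ Real.log (tableCount
      (cloneMat s (fun i j => (K i j : ℕ∞))) (cloneVec s R) (cloneVec s C)) := by
  obtain ⟨L'', h', h''⟩ := exists_between hL
  obtain ⟨N, M, τ, hN, hM, hτ, hRτ, hCτ, hlog⟩ := exists_margins_sequence hT h'' hG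
  have : NeZero N := ⟨hN.ne'⟩
  have : NeZero M := ⟨hM.ne'⟩
  set Q := M * N ^ 2 with hQ
  filter_upwards [eventually_ge_atTop ⌈2 * Q * |L''| / (L'' - L')⌉₊] with s hs
  have hnonneg : 0 ≤ Real.log (tableCount
      (cloneMat s (fun i j => (K i j : ℕ∞))) (cloneVec s R) (cloneVec s C)) :=
    Real.log_natCast_nonneg _
  have hdiv : s = s / Q * (Fintype.card (Fin M) * Fintype.card (Fin N) ^ 2) + s % Q := by
    simp only [Fintype.card_fin]
    exact (Nat.div_add_mod' s Q).symm
  have hcount := prod_tableCount_pow_le hT τ (by simpa using hRτ) (by simpa using hCτ) hdiv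
  simp only [Fintype.card_fin] at hcount
  set l := s / Q with hl
  have hlow : ((l * Q : ℕ) : ℝ) ^ 2 * L'' ≤ Real.log (tableCount
      (cloneMat s (fun i j => (K i j : ℕ∞))) (cloneVec s R) (cloneVec s C)) := by
    have h₁ := Real.log_le_log (by
      exact_mod_cast pow_pos (Finset.prod_pos fun z _ => hτ z) _) (Nat.cast_le (α := ℝ).mpr hcount)
    refine le_trans ?_ h₁
    rw [Nat.cast_pow, Nat.cast_prod, Real.log_pow,
      Real.log_prod fun z _ => Nat.cast_ne_zero.mpr (hτ z).ne']
    have h₂ := mul_le_mul_of_nonneg_left hlog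
      (Nat.cast_nonneg (α := ℝ) ((l * N) ^ 2 * M))
    refine le_trans (le_of_eq ?_) h₂
    rw [hQ]
    push_cast
    ring
  rcases le_or_gt L' 0 with h₀ | h₀
  · exact (mul_nonpos_of_nonneg_of_nonpos (by positivity) h₀).trans hnonneg
  have hL'' : 0 < L'' := h₀.trans h'
  refine le_trans ?_ hlow
  have hs' : 2 * Q * L'' ≤ s * (L'' - L') := by
    rw [← div_le_iff₀ (sub_pos.mpr h')]
    refine le_trans (le_of_eq ?_) (Nat.ceil_le.mp hs)
    rw [abs_of_pos hL'']
  have hle : ((l * Q : ℕ) : ℝ) ≤ s := Nat.cast_le.mpr (Nat.div_mul_le_self s Q)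
  have hge : (s : ℝ) - Q ≤ ((l * Q : ℕ) : ℝ) := by
    have : s ≤ l * Q + Q := by
      have h₁ : l * Q + s % Q = s := Nat.div_add_mod' s Q
      have h₂ : s % Q < Q := Nat.mod_lt s (by positivity)
      linarith
    have : (s : ℝ) ≤ ((l * Q : ℕ) : ℝ) + Q := by exact_mod_cast this
    linarith
  have hs₀ : (0 : ℝ) ≤ s := s.cast_nonneg
  have hsq : (s : ℝ) ^ 2 - 2 * Q * s ≤ ((l * Q : ℕ) : ℝ) ^ 2 := by
    nlinarith [mul_nonneg hs₀ (sub_nonneg.mpr hge), sq_nonneg ((s : ℝ) - ((l * Q : ℕ) : ℝ))]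
  have h₁ := mul_le_mul_of_nonneg_right hsq hL''.le
  have h₂ := mul_le_mul_of_nonneg_left hs' hs₀
  linarith

end Asymptotics

/-- **Theorem 2.** The log-asymptotics of `T_{K^{(s)}}(R^{(s)},C^{(s)})` is given by the
infimum of `G(x,y)/(x^R y^C)` over positive `x`, `y`. -/
theorem bounded_tables_cloning_genfun_limit {m n : ℕ}
    (K : Fin m → Fin n → ℕ) (hK : ∀ i j, 0 < K i j)
    (R : Fin m → ℕ) (hR : ∀ i, 0 < R i) (C : Fin n → ℕ) (hC : ∀ j, 0 < C j)
    (hT : 0 < tableCount (fun i j => (K i j : ℕ∞)) R C) :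
    Filter.Tendsto (fun s : ℕ => (1 / (s : ℝ) ^ 2) *
      Real.log (tableCount (cloneMat s (fun i j => (K i j : ℕ∞)))
        (cloneVec s R) (cloneVec s C)))
      Filter.atTop
      (nhds (Real.log (sInf {v : ℝ | ∃ (x : Fin m → ℝ) (y : Fin n → ℝ),
        (∀ i, 0 < x i) ∧ (∀ j, 0 < y j) ∧
        v = genFun K x y / (monom x R * monom y C)}))) := by
  set V := {v : ℝ | ∃ (x : Fin m → ℝ) (y : Fin n → ℝ), (∀ i, 0 < x i) ∧ (∀ j, 0 < y j) ∧
    v = genFun K x y / (monom x R * monom y C)}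
  set T : ℕ → ℕ := fun s => tableCount (cloneMat s (fun i j => (K i j : ℕ∞)))
    (cloneVec s R) (cloneVec s C)
  have hTpos : ∀ s, (1 : ℝ) ≤ T s := fun s => by
    have := tableCount_pos_of_mem_image (cloned_margins_mem_image (P := Fin s) hT)
    simp only [Fintype.card_fin] at this
    exact_mod_cast this
  have hupper : ∀ v ∈ V, ∀ s, (T s : ℝ) ≤ v ^ s ^ 2 := by
    rintro _ ⟨x, y, hx, hy, rfl⟩ s
    exact tableCount_le_genFun_div_pow K R C hx hy s
  have hone : ∀ v ∈ V, 1 ≤ v := fun v hv => by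
    simpa using (hTpos 1).trans (hupper v hv 1)
  have hne : V.Nonempty :=
    ⟨_, fun _ => 1, fun _ => 1, fun _ => one_pos, fun _ => one_pos, rfl⟩
  have hpos : 0 < sInf V := one_pos.trans_le (le_csInf hne hone)
  have hG : ∀ (x : Fin m → ℝ) (y : Fin n → ℝ), (∀ i, 0 < x i) → (∀ j, 0 < y j) →
      Real.exp (Real.log (sInf V)) * (monom x R * monom y C) ≤ genFun K x y := by
    intro x y hx hy
    have hmonom : 0 < monom x R * monom y C :=
      mul_pos (Finset.prod_pos fun i _ => pow_pos (hx i) _)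
        (Finset.prod_pos fun j _ => pow_pos (hy j) _)
    rw [Real.exp_log hpos, ← le_div_iff₀ hmonom]
    exact csInf_le ⟨1, hone⟩ ⟨x, y, hx, hy, rfl⟩
  refine tendsto_order.mpr ⟨fun a ha => ?_, fun a ha => ?_⟩
  · obtain ⟨b, hab, hb⟩ := exists_between ha
    filter_upwards [eventually_le_log_tableCount hT hb hG, eventually_gt_atTop 0] with s hs hs₀
    refine hab.trans_le ?_
    rw [one_div, ← div_eq_inv_mul, le_div_iff₀ (by positivity), mul_comm]
    exact hs
  · filter_upwards [eventually_gt_atTop 0] with s hs₀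
    refine lt_of_le_of_lt ?_ ha
    rw [Real.le_log_iff_exp_le hpos]
    refine le_csInf hne fun v hv => ?_
    have hv₀ : 0 < v := one_pos.trans_le (hone v hv)
    rw [← Real.le_log_iff_exp_le hv₀, one_div, ← div_eq_inv_mul, div_le_iff₀ (by positivity)]
    refine (Real.log_le_log (one_pos.trans_le (hTpos s)) (hupper v hv s)).trans (le_of_eq ?_)
    rw [Real.log_pow]
    push_cast
    ring
end

section
/- Let κ ∈ ℤ_{>0} ∪ {∞}, R ∈ ℤ_{≥0}^m, C ∈ ℤ_{≥0}^n with |R| = |C| = N, and assume T_κ(R,C) > 0. Then lim_{s→∞} (1/s²) ln I_κ(R^{(s)},C^{(s)}) = −mn·H^max_κ(N/(mn)) + n·Σ_{i=1}^m H^max_κ(r_i/n) + m·Σ_{j=1}^n H^max_κ(c_j/m). -/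
open Real Filter Finset

section Moments

open Polynomial

/-- The Euler operator `X · d/dX`. -/
private noncomputable def eulerOp (P : ℝ[X]) : ℝ[X] := X * derivative P

private lemma coeff_eulerOp (P : ℝ[X]) (k : ℕ) : (eulerOp P).coeff k = k * P.coeff k := by
  cases k with
  | zero => simp [eulerOp]
  | succ k => simp [eulerOp, coeff_X_mul, coeff_derivative, mul_comm]

private lemma eval_eulerOp {P : ℝ[X]} {d : ℕ} (hd : P.natDegree ≤ d) (q : ℝ) :
    (eulerOp P).eval q = ∑ k ∈ range (d + 1), (k : ℝ) * (P.coeff k * q ^ k) := by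
  have hdeg : (eulerOp P).natDegree < d + 1 := by
    rw [Nat.lt_succ_iff, natDegree_le_iff_coeff_eq_zero]
    intro N hN
    rw [coeff_eulerOp, coeff_eq_zero_of_natDegree_lt (by omega), mul_zero]
  rw [eval_eq_sum_range' hdeg]
  exact sum_congr rfl fun k _ => by rw [coeff_eulerOp]; ring

private lemma eval_eulerOp_eulerOp {P : ℝ[X]} {d : ℕ} (hd : P.natDegree ≤ d) (q : ℝ) :
    (eulerOp (eulerOp P)).eval q =
      ∑ k ∈ range (d + 1), (k : ℝ) ^ 2 * (P.coeff k * q ^ k) := by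
  have hdeg : (eulerOp P).natDegree ≤ d := by
    rw [natDegree_le_iff_coeff_eq_zero]
    intro N hN
    rw [coeff_eulerOp, coeff_eq_zero_of_natDegree_lt (by omega), mul_zero]
  rw [eval_eulerOp hdeg]
  exact sum_congr rfl fun k _ => by rw [coeff_eulerOp]; ring

private lemma mul_eulerOp_pow (F : ℝ[X]) (n : ℕ) :
    F * eulerOp (F ^ n) = C (n : ℝ) * eulerOp F * F ^ n := by
  cases n with
  | zero => simp [eulerOp]
  | succ n => simp only [eulerOp, derivative_pow, Nat.add_sub_cancel]; ring

private lemma eulerOp_mul (P Q : ℝ[X]) :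
    eulerOp (P * Q) = eulerOp P * Q + P * eulerOp Q := by
  simp only [eulerOp, derivative_mul]; ring

private lemma eulerOp_C (a : ℝ) : eulerOp (C a) = 0 := by
  simp [eulerOp]

/-- The variance of the exponentially tilted coefficients of a power is linear in the exponent. -/
private lemma sum_sq_dev_pow (F : ℝ[X]) {q μ : ℝ} (hf : F.eval q ≠ 0)
    (hμ : (eulerOp F).eval q = μ * F.eval q) (n d : ℕ) (hd : (F ^ n).natDegree ≤ d) :
    ∑ k ∈ range (d + 1), ((k : ℝ) - n * μ) ^ 2 * ((F ^ n).coeff k * q ^ k) =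
      n * ((eulerOp (eulerOp F)).eval q / F.eval q - μ ^ 2) * F.eval q ^ n := by
  have e0 : (F.eval q) ^ n = ∑ k ∈ range (d + 1), (F ^ n).coeff k * q ^ k := by
    rw [← eval_pow, eval_eq_sum_range' (Nat.lt_succ_of_le hd)]
  have e1 := eval_eulerOp hd q
  have e2 := eval_eulerOp_eulerOp hd q
  have i1 := mul_eulerOp_pow F n
  have i2 := congrArg (fun P => (eulerOp P).eval q) i1
  have i1 := congrArg (eval q) i1
  simp only [mul_assoc, eulerOp_mul, eulerOp_C, zero_mul, zero_add, eval_add,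
    eval_mul, eval_C, eval_pow] at i1 i2
  have expand : ∑ k ∈ range (d + 1), ((k : ℝ) - n * μ) ^ 2 * ((F ^ n).coeff k * q ^ k) =
      (eulerOp (eulerOp (F ^ n))).eval q - 2 * n * μ * (eulerOp (F ^ n)).eval q
        + n ^ 2 * μ ^ 2 * F.eval q ^ n := by
    rw [e0, e1, e2, mul_sum, mul_sum, ← sum_sub_distrib, ← sum_add_distrib]
    exact sum_congr rfl fun k _ => by ring
  rw [expand]
  rw [hμ] at i1 i2
  generalize F.eval q ^ n = p at *
  generalize eval q (eulerOp (F ^ n)) = p1 at *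
  generalize eval q (eulerOp (eulerOp (F ^ n))) = p2 at *
  generalize eval q F = f at *
  generalize eval q (eulerOp (eulerOp F)) = b at *
  have h1 : p1 = n * μ * p := by
    apply mul_left_cancel₀ hf; rw [i1]; ring
  subst h1
  have h2 : p2 = n * (b / f) * p + n * n * μ ^ 2 * p - n * μ ^ 2 * p := by
    apply mul_left_cancel₀ hf
    field_simp
    linarith
  rw [h2]; ring

end Moments

section Finite

open Polynomial Topology

/-- `1 + X + ⋯ + X ^ K`. -/
private noncomputable def truncGeom (K : ℕ) : ℕ[X] := ∑ t ∈ range (K + 1), X ^ t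

private lemma knomial_coe (K n r : ℕ) : knomial K n r = (truncGeom K ^ n).coeff r := by
  simp [knomial, truncGeom]

private lemma coeff_truncGeom {K t : ℕ} (h : t ≤ K) : (truncGeom K).coeff t = 1 := by
  simp [truncGeom, coeff_X_pow, h]

private lemma natDegree_truncGeom_pow_le (K n : ℕ) : (truncGeom K ^ n).natDegree ≤ K * n := by
  refine natDegree_pow_le.trans ?_
  rw [mul_comm]
  refine Nat.mul_le_mul_right _ (natDegree_sum_le_of_forall_le _ _ fun t ht => ?_)
  simpa [Nat.lt_succ_iff] using ht

private lemma knomial_mul_le (K n n' k k' : ℕ) :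
    knomial K n k * knomial K n' k' ≤ knomial K (n + n') (k + k') := by
  simp only [knomial_coe, pow_add, coeff_mul]
  exact single_le_sum (f := fun x : ℕ × ℕ =>
    (truncGeom K ^ n).coeff x.1 * (truncGeom K ^ n').coeff x.2) (fun _ _ => Nat.zero_le _)
    (mem_antidiagonal.2 rfl : (k, k') ∈ antidiagonal (k + k'))

private lemma knomial_coe_pos {K n k : ℕ} (h : k ≤ K * n) : 0 < knomial K n k := by
  induction n generalizing k with
  | zero => simp_all [knomial_coe]
  | succ n ih =>
    have h1 : k - min k K ≤ K * n := by rw [Nat.mul_succ] at h; omega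
    have h2 := knomial_mul_le K n 1 (k - min k K) (min k K)
    rw [knomial_coe K 1, pow_one, coeff_truncGeom (min_le_right _ _), mul_one,
      Nat.sub_add_cancel (min_le_left _ _)] at h2
    exact (ih h1).trans_le h2

private lemma knomial_mul_self (K n : ℕ) : knomial K n (K * n) = 1 := by
  rw [knomial_coe]
  induction n with
  | zero => simp
  | succ n ih =>
    rw [pow_succ, Nat.mul_succ, coeff_mul_add_eq_of_natDegree_le (natDegree_truncGeom_pow_le K n)
      (by simpa using natDegree_truncGeom_pow_le K 1), ih, coeff_truncGeom le_rfl,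
      one_mul]

private lemma knomial_coe_zero (K n : ℕ) : knomial K n 0 = 1 := by
  simp [knomial_coe, coeff_zero_eq_eval_zero, eval_pow, truncGeom, eval_finsetSum]

/-- `truncGeom` with real coefficients. -/
private noncomputable def truncGeomReal (K : ℕ) : ℝ[X] := (truncGeom K).map (Nat.castRingHom ℝ)

private lemma coeff_truncGeomReal_pow (K n k : ℕ) :
    (truncGeomReal K ^ n).coeff k = knomial K n k := by
  rw [truncGeomReal, ← Polynomial.map_pow, coeff_map, knomial_coe]; rfl

private lemma eval_truncGeomReal (K : ℕ) (q : ℝ) :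
    (truncGeomReal K).eval q = ∑ t ∈ range (K + 1), q ^ t := by
  simp [truncGeomReal, truncGeom, Polynomial.map_sum, eval_finsetSum]

private lemma natDegree_truncGeomReal_pow_le (K n : ℕ) :
    (truncGeomReal K ^ n).natDegree ≤ K * n := by
  rw [truncGeomReal, ← Polynomial.map_pow]
  exact natDegree_map_le.trans (natDegree_truncGeom_pow_le K n)

private lemma eval_eulerOp_truncGeomReal (K : ℕ) (q : ℝ) :
    (eulerOp (truncGeomReal K)).eval q = ∑ t ∈ range (K + 1), (t : ℝ) * q ^ t := by
  rw [eval_eulerOp (by simpa using natDegree_truncGeomReal_pow_le K 1)]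
  refine sum_congr rfl fun t ht => ?_
  have := coeff_truncGeom (K := K) (Nat.lt_succ_iff.1 (mem_range.1 ht))
  rw [truncGeomReal, coeff_map, this]; simp

private lemma sum_knomial_mul_pow (K n : ℕ) (q : ℝ) :
    ∑ k ∈ range (K * n + 1), (knomial K n k : ℝ) * q ^ k =
      (∑ t ∈ range (K + 1), q ^ t) ^ n := by
  rw [← eval_truncGeomReal, ← eval_pow,
    eval_eq_sum_range' (Nat.lt_succ_of_le (natDegree_truncGeomReal_pow_le K n))]
  simp [coeff_truncGeomReal_pow]

private lemma sum_pow_pos (K : ℕ) {q : ℝ} (hq : 0 ≤ q) : 0 < ∑ t ∈ range (K + 1), q ^ t := by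
  rw [sum_range_succ']
  have : 0 ≤ ∑ k ∈ range K, q ^ (k + 1) := sum_nonneg fun _ _ => by positivity
  simpa using by linarith

/-- Chebyshev's inequality and pigeonhole: some coefficient near the tilted mean carries
a polynomially large share of the total tilted mass. -/
private lemma exists_large_knomial (K : ℕ) {q μ : ℝ} (hq : 0 < q)
    (hμ : ∑ t ∈ range (K + 1), (t : ℝ) * q ^ t = μ * ∑ t ∈ range (K + 1), q ^ t) :
    ∃ V : ℝ, ∀ (n : ℕ) (w : ℝ), 2 * n * V ≤ w ^ 2 → 0 < w →
      ∃ k ≤ K * n, |(k : ℝ) - n * μ| ≤ w ∧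
        (∑ t ∈ range (K + 1), q ^ t) ^ n ≤ 2 * (K * n + 1) * (knomial K n k * q ^ k) := by
  have hf := sum_pow_pos K hq.le
  refine ⟨(eulerOp (eulerOp (truncGeomReal K))).eval q / (truncGeomReal K).eval q - μ ^ 2,
    fun n w hw hw0 => ?_⟩
  · have key := sum_sq_dev_pow (truncGeomReal K) (q := q) (μ := μ)
      (by rw [eval_truncGeomReal]; exact hf.ne')
      (by rw [eval_truncGeomReal, eval_eulerOp_truncGeomReal, hμ]) n _
      (natDegree_truncGeomReal_pow_le K n)
    simp only [coeff_truncGeomReal_pow] at key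
    rw [eval_truncGeomReal] at hw key
    by_contra! hcon
    have hS := sum_knomial_mul_pow K n q
    set S := (∑ t ∈ range (K + 1), q ^ t) ^ n with hSdef
    have hSpos : 0 < S := pow_pos hf n
    have hD : (0 : ℝ) < K * n + 1 := by positivity
    have hterm : ∀ k ∈ range (K * n + 1), w ^ 2 * ((knomial K n k : ℝ) * q ^ k) <
        w ^ 2 * (S / (2 * (K * n + 1))) +
          ((k : ℝ) - n * μ) ^ 2 * ((knomial K n k : ℝ) * q ^ k) := by
      intro k hk
      have hk' : k ≤ K * n := Nat.lt_succ_iff.1 (mem_range.1 hk)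
      have ha : 0 ≤ (knomial K n k : ℝ) * q ^ k := by positivity
      rcases le_or_gt |(k : ℝ) - n * μ| w with h | h
      · have h1 : (knomial K n k : ℝ) * q ^ k < S / (2 * (K * n + 1)) := by
          rw [lt_div_iff₀ (by positivity)]
          have := hcon k hk' h
          linarith
        have h2 := mul_lt_mul_of_pos_left h1 (pow_pos hw0 2)
        have h3 : 0 ≤ ((k : ℝ) - n * μ) ^ 2 * ((knomial K n k : ℝ) * q ^ k) := by positivity
        linarith
      · have h1 : w ^ 2 ≤ ((k : ℝ) - n * μ) ^ 2 := by
          rw [← sq_abs ((k : ℝ) - n * μ)]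
          exact pow_le_pow_left₀ hw0.le h.le 2
        have h2 := mul_le_mul_of_nonneg_right h1 ha
        have h3 : 0 < w ^ 2 * (S / (2 * (K * n + 1))) := by positivity
        linarith
    have hsum := sum_lt_sum_of_nonempty (by simp) hterm
    rw [← mul_sum, hS, sum_add_distrib, key, sum_const, card_range, nsmul_eq_mul] at hsum
    have h4 : ((K * n + 1 : ℕ) : ℝ) * (w ^ 2 * (S / (2 * (K * n + 1)))) = w ^ 2 * S / 2 := by
      push_cast; field_simp
    rw [h4] at hsum
    have h5 := mul_le_mul_of_nonneg_right hw hSpos.le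
    nlinarith [h5]

private lemma knomial_mul_pow_le {K n k : ℕ} {q : ℝ} (hq : 0 ≤ q) (hk : k ≤ K * n) :
    (knomial K n k : ℝ) * q ^ k ≤ (∑ t ∈ range (K + 1), q ^ t) ^ n := by
  rw [← sum_knomial_mul_pow]
  exact single_le_sum (f := fun k => (knomial K n k : ℝ) * q ^ k)
    (fun _ _ => by positivity) (mem_range.2 (Nat.lt_succ_of_le hk))

private lemma tendsto_natSqrt_div : Tendsto (fun s : ℕ => (Nat.sqrt s : ℝ) / s) atTop (𝓝 0) := by
  have h : Tendsto (fun s : ℕ => (√(s : ℝ))⁻¹) atTop (𝓝 0) :=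
    (Real.tendsto_sqrt_atTop.comp tendsto_natCast_atTop_atTop).inv_tendsto_atTop
  refine squeeze_zero (fun s => by positivity) (fun s => ?_) h
  rcases Nat.eq_zero_or_pos s with rfl | hs
  · simp
  have hs' : (0 : ℝ) < √(s : ℝ) := by positivity
  rw [div_le_iff₀ (by positivity)]
  calc (Nat.sqrt s : ℝ) ≤ √(s : ℝ) := Real.nat_sqrt_le_real_sqrt
    _ = (√(s : ℝ))⁻¹ * (√(s : ℝ) * √(s : ℝ)) := by field_simp
    _ = _ := by rw [Real.mul_self_sqrt (by positivity)]

private lemma tendsto_log_div : Tendsto (fun s : ℕ => Real.log s / s) atTop (𝓝 0) :=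
  (Real.isLittleO_log_id_atTop.tendsto_div_nhds_zero).comp tendsto_natCast_atTop_atTop

/-- Exponential growth rate of truncated multinomial coefficients along a ray. -/
private lemma tendsto_log_knomial {K M r : ℕ} {q : ℝ} (hq : 0 < q) (hr : 0 < r) (hrK : r < K * M)
    (hmean : (M : ℝ) * ∑ t ∈ range (K + 1), (t : ℝ) * q ^ t =
      r * ∑ t ∈ range (K + 1), q ^ t) :
    Tendsto (fun s : ℕ => Real.log (knomial K (s * M) (s * r)) / s) atTop
      (𝓝 (M * Real.log (∑ t ∈ range (K + 1), q ^ t) - r * Real.log q)) := by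
  have hM : 0 < M := Nat.pos_of_ne_zero (by rintro rfl; simp at hrK)
  have hM' : (0 : ℝ) < M := by exact_mod_cast hM
  obtain ⟨V, hV⟩ := exists_large_knomial K (q := q) (μ := r / M) hq (by field_simp; linarith)
  have hf := sum_pow_pos K hq.le
  set f := ∑ t ∈ range (K + 1), q ^ t with hfdef
  set H := M * Real.log f - r * Real.log q with hH
  obtain ⟨B, hB⟩ := exists_nat_ge (max 1 (2 * M * V))
  have hB1 : (1 : ℝ) ≤ B := (le_max_left _ _).trans hB
  have hB0 : 0 < B := by exact_mod_cast one_pos.trans_le hB1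
  have hBV : 2 * M * V ≤ (B : ℝ) := (le_max_right _ _).trans hB
  set δ : ℕ → ℕ := fun s => B * (Nat.sqrt s + 1) with hδ
  have hδlim : Tendsto (fun s : ℕ => (δ s : ℝ) / s) atTop (𝓝 0) := by
    have := (tendsto_natSqrt_div.add (tendsto_one_div_atTop_nhds_zero_nat (𝕜 := ℝ))).const_mul
      (B : ℝ)
    simp only [add_zero, mul_zero] at this
    refine this.congr fun s => ?_
    simp only [hδ]; push_cast; ring
  have hlower : Tendsto (fun s : ℕ => H - ((δ s : ℝ) / s * (|H| + |Real.log q|) +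
      Real.log 2 * (1 / (s : ℝ)) + Real.log (K * M + 1) * (1 / (s : ℝ)) + Real.log s / s))
      atTop (𝓝 H) := by
    have h1 := (tendsto_one_div_atTop_nhds_zero_nat (𝕜 := ℝ))
    have := (((hδlim.mul_const (|H| + |Real.log q|)).add (h1.const_mul (Real.log 2))).add
      (h1.const_mul (Real.log (K * M + 1)))).add tendsto_log_div
    simpa using this.const_sub H
  refine tendsto_of_tendsto_of_tendsto_of_le_of_le' hlower tendsto_const_nhds ?_ ?_
  · have hev : ∀ᶠ s : ℕ in atTop, (δ s : ℝ) / s < 1 := hδlim.eventually_lt_const one_pos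
    filter_upwards [hev, eventually_gt_atTop 0] with s hs hs0
    have hs0' : (0 : ℝ) < s := by exact_mod_cast hs0
    have hδs : δ s < s := by
      rw [div_lt_one hs0'] at hs; exact_mod_cast hs
    obtain ⟨t, ht⟩ : ∃ t, s = t + δ s := ⟨s - δ s, by omega⟩
    have hδpos : (0 : ℝ) < δ s := by simp only [hδ]; positivity
    have hw : 2 * ((t * M : ℕ) : ℝ) * V ≤ (δ s : ℝ) ^ 2 := by
      have h1 : (s : ℝ) ≤ (Nat.sqrt s + 1 : ℝ) ^ 2 := by
        have := (Nat.lt_succ_sqrt' s).le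
        exact_mod_cast this
      have h2 : (t : ℝ) ≤ s := by exact_mod_cast (by omega : t ≤ s)
      have h3 : (B : ℝ) ≤ B ^ 2 := by nlinarith
      have h4 : 2 * ((t * M : ℕ) : ℝ) * V = t * (2 * M * V) := by push_cast; ring
      rw [h4]
      simp only [hδ]; push_cast
      rw [mul_pow]
      calc (t : ℝ) * (2 * M * V) ≤ t * B := by gcongr
        _ ≤ (Nat.sqrt s + 1 : ℝ) ^ 2 * B ^ 2 := by
          apply mul_le_mul (h2.trans h1) h3 (by positivity) (by positivity)
        _ = _ := by ring
    obtain ⟨k, hk, hkw, hlarge⟩ := hV (t * M) (δ s) hw hδpos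
    have hmu : ((t * M : ℕ) : ℝ) * (r / M) = t * r := by push_cast; field_simp
    rw [hmu, abs_le] at hkw
    have hk1 : k ≤ t * r + δ s := by
      have : (k : ℝ) ≤ ((t * r + δ s : ℕ) : ℝ) := by push_cast; linarith
      exact_mod_cast this
    have hk2 : t * r ≤ k + δ s := by
      have : ((t * r : ℕ) : ℝ) ≤ ((k + δ s : ℕ) : ℝ) := by push_cast; linarith
      exact_mod_cast this
    have hsr : s * r = t * r + δ s * r := by rw [← add_mul, ← ht]
    have hkr : k ≤ s * r := by
      have : δ s * 1 ≤ δ s * r := Nat.mul_le_mul_left _ hr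
      omega
    have hrest : s * r - k ≤ K * (δ s * M) := by
      have h1 : δ s * (r + 1) ≤ δ s * (K * M) := Nat.mul_le_mul_left _ hrK
      have h2 : K * (δ s * M) = δ s * (K * M) := by ring
      have h3 : δ s * (r + 1) = δ s * r + δ s := by ring
      omega
    have hle : knomial K (t * M) k ≤ knomial K (s * M) (s * r) := by
      have h1 := knomial_mul_le K (t * M) (δ s * M) k (s * r - k)
      rw [← add_mul, ← ht, Nat.add_sub_cancel' hkr] at h1
      exact (Nat.le_mul_of_pos_right _ (knomial_coe_pos hrest)).trans h1
    have hcpos : (0 : ℝ) < knomial K (t * M) k := by exact_mod_cast knomial_coe_pos hk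
    have hlog1 : Real.log (knomial K (t * M) k) ≤ Real.log (knomial K (s * M) (s * r)) :=
      Real.log_le_log hcpos (by exact_mod_cast hle)
    have hcard : (K * (t * M : ℕ) + 1 : ℝ) ≤ (K * M + 1) * s := by
      have h2 : (t : ℝ) ≤ s := by exact_mod_cast (by omega : t ≤ s)
      have h3 : (1 : ℝ) ≤ s := by exact_mod_cast hs0
      push_cast
      have h4 : (K : ℝ) * (t * M) ≤ K * (s * M) := by gcongr
      nlinarith
    have hlog2 := Real.log_le_log (pow_pos hf (t * M)) (hlarge.trans
      (mul_le_mul_of_nonneg_right (mul_le_mul_of_nonneg_left hcard zero_le_two)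
        (by positivity)))
    rw [Real.log_pow, Real.log_mul (by positivity) (by positivity),
      Real.log_mul (by positivity) (by positivity), Real.log_mul (by positivity) (by positivity),
      Real.log_mul (by positivity) (by positivity), Real.log_pow] at hlog2
    have hkq : (k : ℝ) * Real.log q ≤ t * r * Real.log q + δ s * |Real.log q| := by
      have h1 : ((k : ℝ) - t * r) * Real.log q ≤ δ s * |Real.log q| := by
        refine (le_abs_self _).trans ?_
        rw [abs_mul]
        exact mul_le_mul_of_nonneg_right (abs_le.2 hkw) (abs_nonneg _)
      linarith
    have hHδ : (δ s : ℝ) * H ≤ δ s * |H| := by gcongr; exact le_abs_self _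
    have hst : (s : ℝ) = t + δ s := by exact_mod_cast ht
    rw [le_div_iff₀ hs0']
    have hmul : (H - ((δ s : ℝ) / s * (|H| + |Real.log q|) +
        Real.log 2 * (1 / (s : ℝ)) + Real.log (K * M + 1) * (1 / (s : ℝ)) +
        Real.log s / s)) * s =
        s * H - δ s * |H| - δ s * |Real.log q| - Real.log 2 - Real.log (K * M + 1)
          - Real.log s := by
      field_simp; ring
    rw [hmul]
    push_cast at hlog2
    have hsH : (s : ℝ) * H = t * M * Real.log f - t * r * Real.log q + δ s * H := by
      rw [hst]
      simp only [hH]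
      ring
    linarith
  · filter_upwards [eventually_gt_atTop 0] with s hs0
    have hs0' : (0 : ℝ) < s := by exact_mod_cast hs0
    have hk : s * r ≤ K * (s * M) := by
      have h2 : K * (s * M) = s * (K * M) := by ring
      rw [h2]; exact Nat.mul_le_mul_left _ hrK.le
    have hcpos : (0 : ℝ) < knomial K (s * M) (s * r) := by exact_mod_cast knomial_coe_pos hk
    have h1 := Real.log_le_log (by positivity) (knomial_mul_pow_le hq.le hk)
    rw [Real.log_mul (by positivity) (by positivity), Real.log_pow, Real.log_pow] at h1
    rw [div_le_iff₀ hs0']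
    push_cast at h1
    simp only [hH]
    linarith

end Finite

section Entropy

open Topology

private lemma Hmax_eq_zero {κ : ℕ∞} {x : ℝ} (h : tgQ κ x = 0) : Hmax κ x = 0 := by
  have hP : tgP κ x = 1 := by
    unfold tgP
    split_ifs
    · simp [h]
    · rw [h, sum_range_succ']; simp
  have hterm : ∀ t, tgPMF κ x t * Real.log (tgPMF κ x t) = 0 := by
    intro t
    rcases t with _ | t <;> simp [tgPMF, hP, h]
  simp [Hmax, hterm]

private lemma tgQ_zero (κ : ℕ∞) : tgQ κ 0 = 0 := by
  refine IsLeast.csInf_eq ⟨⟨le_rfl, ?_⟩, fun q hq => hq.1⟩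
  unfold tgMean
  split_ifs
  · simp
  · refine div_nonneg (sum_nonneg fun _ _ => ?_) (sum_nonneg fun _ _ => ?_) <;> positivity

private lemma tgQ_natCast_self {K : ℕ} (hK : 1 ≤ K) : tgQ K K = 0 := by
  have : {q : ℝ | 0 ≤ q ∧ (K : ℝ) ≤ tgMean K q} = ∅ := by
    refine Set.eq_empty_of_forall_notMem fun q ⟨hq, h⟩ => ?_
    simp only [tgMean, ENat.natCast_ne_top, if_false, ENat.toNat_natCast] at h
    rw [le_div_iff₀ (sum_pow_pos K hq), mul_sum] at h
    refine h.not_gt (sum_lt_sum (fun t ht => ?_) ⟨0, by simp, ?_⟩)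
    · have : (t : ℝ) ≤ K := by exact_mod_cast Nat.lt_succ_iff.1 (mem_range.1 ht)
      gcongr
    · simpa using Nat.lt_of_succ_le hK
  rw [tgQ, this, Real.sInf_empty]

/-- Strictly inside the range of means, the ratio parameter solves the mean equation. -/
private lemma tgQ_natCast_spec {K : ℕ} {x : ℝ} (hx : 0 < x) (hxK : x < K) :
    0 < tgQ K x ∧ ∑ t ∈ range (K + 1), (t : ℝ) * tgQ K x ^ t =
      x * ∑ t ∈ range (K + 1), tgQ K x ^ t := by
  set S : Set ℝ := {q : ℝ | 0 ≤ q ∧ x ≤ tgMean K q} with hS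
  have hmean : ∀ q, tgMean K q = (∑ t ∈ range (K + 1), (t : ℝ) * q ^ t) /
      ∑ t ∈ range (K + 1), q ^ t := by intro q; simp [tgMean]
  have hcont : ContinuousOn (tgMean K) (Set.Ici 0) := by
    simp_rw [funext hmean]
    exact ContinuousOn.div (by fun_prop) (by fun_prop) fun q hq => (sum_pow_pos K hq).ne'
  have hbdd : BddBelow S := ⟨0, fun q hq => hq.1⟩
  have hclosed : IsClosed S := hcont.preimage_isClosed_of_isClosed isClosed_Ici isClosed_Ici
  have hne : S.Nonempty := by
    have hd : 0 < (K : ℝ) - x := sub_pos.2 hxK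
    set q : ℝ := 1 + x * K / (K - x) with hq
    have hq1 : 1 ≤ q := by
      have : 0 ≤ x * K / (K - x) := by positivity
      linarith
    refine ⟨q, by linarith, ?_⟩
    rw [hmean, le_div_iff₀ (sum_pow_pos K (by linarith)), sum_range_succ, sum_range_succ]
    obtain ⟨k, rfl⟩ : ∃ k, K = k + 1 :=
      ⟨K - 1, by
        have : 0 < K := by exact_mod_cast hx.trans hxK
        omega⟩
    have h1 : ∑ t ∈ range (k + 1), q ^ t ≤ (k + 1 : ℕ) * q ^ k := by
      refine (sum_le_card_nsmul _ _ (q ^ k) fun t ht => ?_).trans (by simp)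
      exact pow_le_pow_right₀ hq1 (Nat.lt_succ_iff.1 (mem_range.1 ht))
    have h2 : 0 ≤ ∑ t ∈ range (k + 1), (t : ℝ) * q ^ t := sum_nonneg fun _ _ => by positivity
    have h3 : x * ((k + 1 : ℕ) : ℝ) ≤ (((k + 1 : ℕ) : ℝ) - x) * q := by
      rw [hq, mul_add, mul_div_cancel₀ _ hd.ne']; linarith
    have h4 := mul_le_mul_of_nonneg_right h3 (by positivity : 0 ≤ q ^ k)
    have h5 := mul_le_mul_of_nonneg_left h1 hx.le
    have h6 : q ^ (k + 1) = q * q ^ k := by ring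
    rw [h6]
    linarith
  obtain ⟨hq0, hqx⟩ : tgQ K x ∈ S := hclosed.csInf_mem hne hbdd
  have hzero : tgMean K 0 = 0 := by
    rw [hmean, div_eq_zero_iff]; left
    exact sum_eq_zero fun t _ => by rcases t with _ | t <;> simp
  have heq : tgMean K (tgQ K x) = x := by
    refine le_antisymm (not_lt.1 fun hlt => ?_) hqx
    obtain ⟨q', ⟨h0, h1⟩, hq'⟩ := intermediate_value_Icc hq0
      (hcont.mono fun y hy => hy.1) ⟨hzero.trans_le hx.le, hqx⟩
    have h2 : tgQ K x ≤ q' := csInf_le hbdd ⟨h0, hq'.ge⟩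
    rw [le_antisymm h1 h2] at hq'
    exact hlt.ne' hq'
  refine ⟨hq0.lt_of_ne fun h => ?_, ?_⟩
  · rw [← h, hzero] at heq; exact hx.ne heq
  · rwa [hmean, div_eq_iff (sum_pow_pos K hq0).ne'] at heq

private lemma Hmax_natCast {K : ℕ} {x : ℝ} (hx : 0 < x) (hxK : x < K) :
    Hmax K x = Real.log (∑ t ∈ range (K + 1), tgQ K x ^ t) - x * Real.log (tgQ K x) := by
  obtain ⟨hq, hmean⟩ := tgQ_natCast_spec hx hxK
  have hpmf : ∀ t ∈ range (K + 1), tgPMF K x t * Real.log (tgPMF K x t) =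
      (∑ t ∈ range (K + 1), tgQ K x ^ t)⁻¹ * (tgQ K x ^ t *
        -Real.log (∑ t ∈ range (K + 1), tgQ K x ^ t) + t * tgQ K x ^ t * Real.log (tgQ K x)) := by
    intro t ht
    have hf := sum_pow_pos K hq.le
    have : (t : ℕ∞) ≤ K := by exact_mod_cast Nat.lt_succ_iff.1 (mem_range.1 ht)
    simp only [tgPMF, this, if_true, tgP, ENat.natCast_ne_top, if_false, ENat.toNat_natCast]
    rw [Real.log_mul (by positivity) (by positivity), Real.log_inv, Real.log_pow]
    ring
  have hf := sum_pow_pos K hq.le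
  rw [Hmax, tsum_eq_sum (s := range (K + 1)), sum_congr rfl hpmf, ← mul_sum, sum_add_distrib,
    ← sum_mul, ← sum_mul, hmean]
  · field_simp; ring
  · intro t ht
    have : ¬ (t : ℕ∞) ≤ K := by
      rw [Nat.cast_le]; simpa using ht
    simp [tgPMF, this]

private lemma tgQ_top {x : ℝ} (hx : 0 < x) : tgQ ⊤ x = x / (1 + x) := by
  have h1 : 0 < 1 + x := by linarith
  refine IsLeast.csInf_eq ⟨⟨by positivity, ?_⟩, fun q ⟨hq, h⟩ => ?_⟩
  · simp only [tgMean, if_true]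
    have : 1 - x / (1 + x) = 1 / (1 + x) := by field_simp; ring
    rw [this]
    apply le_of_eq
    field_simp
  · simp only [tgMean, if_true] at h
    have hq1 : 0 < 1 - q := by
      by_contra! hcon
      exact (hx.trans_le h).not_ge (div_nonpos_of_nonneg_of_nonpos hq hcon)
    rw [le_div_iff₀ hq1] at h
    rw [div_le_iff₀ h1]
    linarith

private lemma Hmax_top {x : ℝ} (hx : 0 < x) :
    Hmax ⊤ x = Real.log (1 + x) - x * Real.log (x / (1 + x)) := by
  have h1 : 0 < 1 + x := by linarith
  set q := x / (1 + x) with hq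
  have hq0 : 0 < q := by positivity
  have hp : 1 - q = (1 + x)⁻¹ := by rw [hq]; field_simp; ring
  have hp0 : 0 < 1 - q := by rw [hp]; positivity
  have hnorm : ‖q‖ < 1 := by rw [Real.norm_of_nonneg hq0.le]; linarith
  have hpmf : ∀ t : ℕ, tgPMF ⊤ x t * Real.log (tgPMF ⊤ x t) =
      (1 - q) * Real.log (1 - q) * q ^ t + (1 - q) * Real.log q * (t * q ^ t) := by
    intro t
    simp only [tgPMF, le_top, if_true, tgP, tgQ_top hx, ← hq]
    rw [Real.log_mul (by positivity) (by positivity), Real.log_pow]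
    ring
  have hsum := ((hasSum_geometric_of_norm_lt_one hnorm).mul_left
    ((1 - q) * Real.log (1 - q))).add
    ((hasSum_coe_mul_geometric_of_norm_lt_one hnorm).mul_left ((1 - q) * Real.log q))
  rw [Hmax, tsum_congr hpmf, hsum.tsum_eq, hp, Real.log_inv]
  generalize Real.log q = l
  rw [hq]
  field_simp
  ring

end Entropy

section Growth

open Topology

private lemma knomial_pos {κ : ℕ∞} {M r : ℕ} (h : (r : ℕ∞) ≤ κ * M) : 0 < knomial κ M r := by
  induction κ with
  | top =>
    simp only [knomial, if_true]
    refine Nat.choose_pos ?_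
    rcases Nat.eq_zero_or_pos M with rfl | hM
    · have : r = 0 := by simpa using h
      omega
    · omega
  | coe K => exact knomial_coe_pos (by exact_mod_cast h)

private lemma knomial_zero_right (κ : ℕ∞) (M : ℕ) : knomial κ M 0 = 1 := by
  induction κ with
  | top => simp [knomial]
  | coe K => exact knomial_coe_zero K M

private lemma knomial_one (n r : ℕ) : knomial (1 : ℕ) n r = n.choose r := by
  rw [knomial_coe]
  simp [truncGeom, sum_range_succ, Polynomial.coeff_one_add_X_pow]

private lemma tendsto_log_knomial_natCast {K M r : ℕ} (hK : 1 ≤ K) (h : r ≤ K * M) :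
    Tendsto (fun s : ℕ => Real.log (knomial K (s * M) (s * r)) / s) atTop
      (𝓝 (M * Hmax K ((r : ℝ) / M))) := by
  rcases Nat.eq_zero_or_pos r with rfl | hr
  · simp [knomial_zero_right, Hmax_eq_zero (tgQ_zero _)]
  have hM : 0 < M := Nat.pos_of_ne_zero (by rintro rfl; simp at h; omega)
  have hM' : (0 : ℝ) < M := by exact_mod_cast hM
  rcases h.eq_or_lt with rfl | hlt
  · have h1 : ((K * M : ℕ) : ℝ) / M = K := by push_cast; field_simp
    have h2 : ∀ s : ℕ, knomial K (s * M) (s * (K * M)) = 1 := by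
      intro s; rw [mul_left_comm]; exact knomial_mul_self _ _
    rw [h1, Hmax_eq_zero (tgQ_natCast_self hK)]
    simp [h2]
  have hx : 0 < (r : ℝ) / M := by positivity
  have hxK : (r : ℝ) / M < K := by rw [div_lt_iff₀ hM']; exact_mod_cast hlt
  obtain ⟨hq, hmean⟩ := tgQ_natCast_spec hx hxK
  have hlim := tendsto_log_knomial hq hr hlt (by rw [hmean]; field_simp)
  convert hlim using 2
  rw [Hmax_natCast hx hxK]
  field_simp

private lemma tendsto_log_choose {M r : ℕ} (hM : 0 < M) (hr : 0 < r) :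
    Tendsto (fun s : ℕ => Real.log ((s * (M + r)).choose (s * r)) / s) atTop
      (𝓝 ((M + r) * Real.log ((M + r) / M) - r * Real.log (r / M))) := by
  have hM' : (0 : ℝ) < M := by exact_mod_cast hM
  have hlim := tendsto_log_knomial (K := 1) (M := M + r) (r := r) (q := r / M)
    (by positivity) hr (by omega) (by simp [sum_range_succ]; field_simp)
  simp only [knomial_one] at hlim
  convert hlim using 4
  · push_cast; rfl
  · simp [sum_range_succ]; field_simp

private lemma knomial_top_mul {M r : ℕ} (hM : 0 < M) :
    knomial ⊤ M r * (M + r) = M * (M + r).choose r := by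
  obtain ⟨M, rfl⟩ : ∃ k, M = k + 1 := ⟨M - 1, by omega⟩
  simp only [knomial, if_true]
  have h := Nat.add_one_mul_choose_eq (r + M) M
  rw [show r + (M + 1) - 1 = r + M by omega, Nat.choose_symm_add,
    show M + 1 + r = (r + M) + 1 by omega,
    Nat.choose_symm_of_eq_add (show r + M + 1 = r + (M + 1) by omega), mul_comm, h, mul_comm]

private lemma tendsto_log_knomial_top {M r : ℕ} (hM : 0 < M) :
    Tendsto (fun s : ℕ => Real.log (knomial ⊤ (s * M) (s * r)) / s) atTop
      (𝓝 (M * Hmax ⊤ ((r : ℝ) / M))) := by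
  rcases Nat.eq_zero_or_pos r with rfl | hr
  · simp [knomial_zero_right, Hmax_eq_zero (tgQ_zero _)]
  have hM' : (0 : ℝ) < M := by exact_mod_cast hM
  have hr' : (0 : ℝ) < r := by exact_mod_cast hr
  have hlim := (tendsto_log_choose hM hr).add
    ((tendsto_one_div_atTop_nhds_zero_nat (𝕜 := ℝ)).const_mul (Real.log (M / (M + r))))
  have hval : (M + r) * Real.log ((M + r) / M) - r * Real.log (r / M) +
      Real.log (M / (M + r)) * 0 = (M : ℝ) * Hmax ⊤ ((r : ℝ) / M) := by
    rw [Hmax_top (by positivity)]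
    have h1 : 1 + (r : ℝ) / M = (M + r) / M := by field_simp
    rw [mul_zero, add_zero, h1, div_div_div_cancel_right₀ hM'.ne', Real.log_div (by positivity) (by positivity),
      Real.log_div (by positivity) (by positivity), Real.log_div (by positivity) (by positivity)]
    field_simp
    ring
  rw [hval] at hlim
  refine hlim.congr' ?_
  filter_upwards [eventually_gt_atTop 0] with s hs
  have hs' : (0 : ℝ) < s := by exact_mod_cast hs
  have hk := knomial_top_mul (r := s * r) (Nat.mul_pos hs hM)
  have hc : (0 : ℝ) < (s * (M + r)).choose (s * r) := by
    exact_mod_cast Nat.choose_pos (Nat.mul_le_mul_left _ (by omega))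
  have hk' : (knomial ⊤ (s * M) (s * r) : ℝ) =
      (M / (M + r)) * (s * (M + r)).choose (s * r) := by
    rw [← mul_add] at hk
    have hk2 : (knomial ⊤ (s * M) (s * r) : ℝ) * (s * (M + r)) =
      (s * M) * (s * (M + r)).choose (s * r) := by exact_mod_cast hk
    field_simp
    apply mul_left_cancel₀ hs'.ne'
    linarith
  rw [hk', Real.log_mul (by positivity) hc.ne']
  ring

private lemma tendsto_log_knomial_div {κ : ℕ∞} (hκ : 1 ≤ κ) {M r : ℕ} (h : (r : ℕ∞) ≤ κ * M) :
    Tendsto (fun s : ℕ => Real.log (knomial κ (s * M) (s * r)) / s) atTop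
      (𝓝 (M * Hmax κ ((r : ℝ) / M))) := by
  rcases Nat.eq_zero_or_pos M with rfl | hM
  · have : r = 0 := by simpa using h
    simp [this, knomial_zero_right]
  induction κ with
  | top => exact tendsto_log_knomial_top hM
  | coe K => exact tendsto_log_knomial_natCast (by exact_mod_cast hκ) (by exact_mod_cast h)

end Growth

private lemma margins_le_of_tableCount_pos {I J : Type*} [Fintype I] [Fintype J] {κ : ℕ∞}
    {R : I → ℕ} {C : J → ℕ} (hT : 0 < tableCount (fun (_ : I) (_ : J) => κ) R C) :
    (∀ i, (R i : ℕ∞) ≤ κ * Fintype.card J) ∧ ∀ j, (C j : ℕ∞) ≤ κ * Fintype.card I := by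
  obtain ⟨A, hR, hC, hA⟩ := Set.nonempty_of_ncard_ne_zero hT.ne'
  refine ⟨fun i => ?_, fun j => ?_⟩
  · rw [← hR i, Nat.cast_sum, mul_comm]
    simpa using sum_le_card_nsmul univ _ κ fun j _ => hA i j
  · rw [← hC j, Nat.cast_sum, mul_comm]
    simpa using sum_le_card_nsmul univ _ κ fun i _ => hA i j

private lemma log_indepEst {κ : ℕ∞} {I J : Type*} [Fintype I] [Fintype J] {R : I → ℕ}
    {C : J → ℕ} (hR : ∀ i, (R i : ℕ∞) ≤ κ * Fintype.card J)
    (hC : ∀ j, (C j : ℕ∞) ≤ κ * Fintype.card I)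
    (hN : ((∑ i, R i : ℕ) : ℕ∞) ≤ κ * (Fintype.card I * Fintype.card J : ℕ)) :
    Real.log (indepEst κ R C) =
      -Real.log (knomial κ (Fintype.card I * Fintype.card J) (∑ i, R i)) +
      ∑ i, Real.log (knomial κ (Fintype.card J) (R i)) +
      ∑ j, Real.log (knomial κ (Fintype.card I) (C j)) := by
  have pos : ∀ {M r : ℕ}, (r : ℕ∞) ≤ κ * M → (knomial κ M r : ℝ) ≠ 0 := fun h => by
    exact_mod_cast (knomial_pos h).ne'
  have h1 := prod_ne_zero_iff.2 fun i (_ : i ∈ univ) => pos (hR i)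
  have h2 := prod_ne_zero_iff.2 fun j (_ : j ∈ univ) => pos (hC j)
  rw [indepEst, Real.log_mul (mul_ne_zero (inv_ne_zero (pos hN)) h1) h2,
    Real.log_mul (inv_ne_zero (pos hN)) h1, Real.log_inv,
    Real.log_prod fun i _ => pos (hR i), Real.log_prod fun j _ => pos (hC j)]

private lemma sum_cloneVec {m : ℕ} {E : Type*} [AddCommMonoid E] (s : ℕ) (R : Fin m → ℕ)
    (g : ℕ → E) : ∑ p, g (cloneVec s R p) = s • ∑ i, g (s * R i) := by
  simp [cloneVec, Fintype.sum_prod_type]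

private lemma natCast_mul_le_mul {κ : ℕ∞} {r M : ℕ} (s : ℕ) (h : (r : ℕ∞) ≤ κ * M) :
    ((s * r : ℕ) : ℕ∞) ≤ κ * (s * M : ℕ) := by
  push_cast
  rw [mul_left_comm]
  gcongr

/-- **Theorem 3(ii).** The log-asymptotics of the independence estimate
`I_κ(R^{(s)},C^{(s)})`. -/
theorem indep_estimate_cloning_entropy_limit {m n : ℕ} (κ : ℕ∞) (hκ : 1 ≤ κ)
    (R : Fin m → ℕ) (C : Fin n → ℕ) (N : ℕ)
    (hRN : ∑ i, R i = N) (hCN : ∑ j, C j = N)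
    (hT : 0 < tableCount (fun (_ : Fin m) (_ : Fin n) => κ) R C) :
    Filter.Tendsto (fun s : ℕ => (1 / (s : ℝ) ^ 2) *
      Real.log (indepEst κ (cloneVec s R) (cloneVec s C)))
      Filter.atTop
      (nhds (-(m * n : ℝ) * Hmax κ ((N : ℝ) / (m * n)) +
        (n : ℝ) * ∑ i, Hmax κ ((R i : ℝ) / n) +
        (m : ℝ) * ∑ j, Hmax κ ((C j : ℝ) / m))) := by
  obtain ⟨hR, hC⟩ := margins_le_of_tableCount_pos hT
  simp only [Fintype.card_fin] at hR hC
  have hN : (N : ℕ∞) ≤ κ * (m * n : ℕ) := by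
    rw [← hRN, Nat.cast_sum, Nat.cast_mul, mul_left_comm]
    simpa using sum_le_card_nsmul univ _ _ fun i _ => hR i
  have hlimN := (tendsto_log_knomial_div hκ hN).comp (tendsto_pow_atTop two_ne_zero)
  have hlimR := tendsto_finsetSum univ fun i _ => tendsto_log_knomial_div hκ (hR i)
  have hlimC := tendsto_finsetSum univ fun j _ => tendsto_log_knomial_div hκ (hC j)
  have hlim := (hlimN.neg.add hlimR).add hlimC
  rw [← mul_sum, ← mul_sum] at hlim
  push_cast at hlim
  rw [neg_mul]
  refine hlim.congr fun s => ?_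
  have hsum : ∑ p, cloneVec s R p = s ^ 2 * N := by
    have := sum_cloneVec s R id
    simp only [id] at this
    rw [this, ← mul_sum, hRN, smul_eq_mul]; ring
  have hmn : s * m * (s * n) = s ^ 2 * (m * n) := by ring
  rw [log_indepEst]
  · rw [hsum]
    simp only [Fintype.card_prod, Fintype.card_fin]
    rw [hmn, sum_cloneVec s R fun r => Real.log (knomial κ (s * n) r),
      sum_cloneVec s C fun r => Real.log (knomial κ (s * m) r)]
    rcases eq_or_ne s 0 with rfl | hs
    · simp
    have hs' : (s : ℝ) ≠ 0 := by exact_mod_cast hs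
    simp only [Function.comp_apply, nsmul_eq_mul, ← sum_div]
    push_cast
    field_simp
  · intro p
    simpa [cloneVec] using natCast_mul_le_mul s (hR p.2)
  · intro p
    simpa [cloneVec] using natCast_mul_le_mul s (hC p.2)
  · rw [hsum]
    simp only [Fintype.card_prod, Fintype.card_fin]
    rw [hmn]
    exact natCast_mul_le_mul _ hN
end
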